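/- arXiv:2110.03838 — 2 statements merged into one kernel-verified Lean document; each statement's English description precedes it below -/
import Mathlib

section
/- Let p ∈ ℕ₀ and 0 < α < 2. Let φ ∈ C_c^N(ℝ²) with N ≥ 2p+4 and set f = φ·s where s is the on-diagonal singular kernel in dimension n = 2. Let g ∈ C_c^∞(ℝ²) be radially symmetric with g(0) = 1 and ∂^k g(0) = 0 for all k ∈ ℕ₀² with 1 ≤ |k|₁ ≤ 2p+1, and for each sufficiently small h > 0 let ω(h) ∈ ℝ^{N_p} be the solution of the on-diagonal moment linear system K G(h) ω(h) = c(h). Then there exists ω̄ ∈ ℝ^{N_p} such that |ω(h) − ω̄|₂ = O(h^{2p+2}) as h → 0, and moreover, defining the corrected trapezoidal rule Q_h^p[f] = T_h^0[f] + h^{2−α} Σ_{γ∈𝓘_p} ω̄_γ Σ_{β∈𝓖_γ} φ(βh), there exists a constant C > 0 such that |Q_h^p[f] − ∫_{ℝ²} f(x) dx| ≤ C h^{2p+4−α} for all sufficiently small h > 0. -/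
open MeasureTheory Real

noncomputable def euclNorm {n : ℕ} (x : Fin n → ℝ) : ℝ := Real.sqrt (∑ j, x j ^ 2)

noncomputable def pd {n : ℕ} (j : Fin n) (f : (Fin n → ℝ) → ℝ) : (Fin n → ℝ) → ℝ :=
  fun x => fderiv ℝ f x (Pi.single j 1)

noncomputable def md {n : ℕ} (γ : Fin n → ℕ) (f : (Fin n → ℝ) → ℝ) : (Fin n → ℝ) → ℝ :=
  (List.finRange n).foldr (fun j g => (pd j)^[γ j] g) f

noncomputable def trap {n : ℕ} (h : ℝ) (f : (Fin n → ℝ) → ℝ) : ℝ :=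
  h ^ n * ∑' β : {β : Fin n → ℤ // β ≠ 0}, f (fun j => (β.1 j : ℝ) * h)

/-- The on-diagonal singular kernel `s(x) = x₁² / |x|^{2+α}` on `ℝ²`. -/
noncomputable def sOn (α : ℝ) (x : Fin 2 → ℝ) : ℝ := x 0 ^ 2 / euclNorm x ^ ((2:ℝ) + α)

/-- The set `𝓖_γ` of all sign changes of `(γ₁, γ₂)`. -/
def Gon (γ : ℕ × ℕ) : Finset (ℤ × ℤ) :=
  {((γ.1 : ℤ), (γ.2 : ℤ)), (-(γ.1 : ℤ), (γ.2 : ℤ)), ((γ.1 : ℤ), -(γ.2 : ℤ)),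
    (-(γ.1 : ℤ), -(γ.2 : ℤ))}

noncomputable def gridPt (β : ℤ × ℤ) (h : ℝ) : Fin 2 → ℝ := ![(β.1 : ℝ) * h, (β.2 : ℝ) * h]

/-! Call `u` a symbol of order `r` if its `k`-th derivatives are `O(‖x‖ ^ (r - k))`. For `r > -n`
and `u` compactly supported, the punctured trapezoidal rule on `ℝⁿ` integrates `u` up to
`O(h ^ (r + n))`. Scaling reduces this to `h = 1`, where the error is the integral of `u` over the
central cell plus that of `U - U 0`, with `U` the sum of all lattice translates of `u` but the
central one. High derivatives of `U` are controlled by a convergent lattice sum, and the jumps of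
`U` between opposite faces of the cell come from the omitted translate alone, because the full sum
is periodic. A function with small high derivatives and small face-to-face jumps of all lower ones
is nearly constant, by descending induction on the order of the derivative.

Two applications give the theorem. First, replacing `h` by `c * h` in a rescaled moment amounts, by
homogeneity of the kernel, to replacing `g` by its dilate `g (c • x)`; since `g - 1` is flat at the
origin, so is `g x - g (c • x)`, and the moments converge at the rate `h ^ (2 * p + 2)`. The weights
inherit this because `K` is invertible: a polynomial of degree at most `p` in `x₁²` and `x₂²` that
vanishes at every `γ ∈ ℕ²` with `|γ| ≤ p` is zero. Second, with `P` the Taylor polynomial of `φ`,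
the function `φ - g * P` is flat at the origin, so the rule and its correction are both accurate on
it, while on `g * P` the moment equations make the corrected rule exact up to the error of the
weights, the odd monomials cancelling by reflection symmetry. -/

section Symbols

variable {E : Type*} [NormedAddCommGroup E] [NormedSpace ℝ E]

theorem iteratedFDeriv_comp_smul_of_ne_zero {c : ℝ} (hc : c ≠ 0) (u : E → ℝ) (k : ℕ) (x : E) :
    iteratedFDeriv ℝ k (fun y => u (c • y)) x = c ^ k • iteratedFDeriv ℝ k u (c • x) := by
  have h := (ContinuousLinearEquiv.smulLeft (R₁ := ℝ) (M₁ := E)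
    (Units.mk0 c hc)).iteratedFDerivWithin_comp_right u uniqueDiffOn_univ (Set.mem_univ (c • x)) k
  simp only [Set.preimage_univ, iteratedFDerivWithin_univ] at h
  refine h.trans ?_
  ext v
  exact (iteratedFDeriv ℝ k u (c • x)).map_smul_univ (fun _ => c) v |>.trans (by simp)

/-- Symbols of order `r` and smoothness `q`: functions that are `C^q` away from the origin and
whose `k`-th derivatives, `k ≤ q`, are bounded by `A ‖x‖ ^ (r - k)`. The constant is part of the
data because the quadrature estimates are linear in it. -/
structure IsSymbol (q : ℕ) (r A : ℝ) (u : E → ℝ) : Prop where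
  contDiffOn : ContDiffOn ℝ q u {0}ᶜ
  norm_iteratedFDeriv_le : ∀ k ≤ q, ∀ x ≠ 0, ‖iteratedFDeriv ℝ k u x‖ ≤ A * ‖x‖ ^ (r - k)

/-- Kernels that are smooth away from the origin and positively homogeneous of degree `ρ`. -/
structure IsHomogeneousKernel (ρ : ℝ) (s : E → ℝ) : Prop where
  contDiffOn : ∀ q : ℕ, ContDiffOn ℝ q s {0}ᶜ
  map_smul : ∀ t > 0, ∀ x, s (t • x) = t ^ ρ * s x

/-- All derivatives of `u` of order less than `m` vanish at the origin. -/
def VanishesToOrder (m : ℕ) (u : E → ℝ) : Prop :=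
  ∀ k < m, iteratedFDeriv ℝ k u 0 = 0

namespace IsSymbol

variable {q : ℕ} {r A : ℝ} {u : E → ℝ}

theorem contDiffAt (hu : IsSymbol q r A u) {x : E} (hx : x ≠ 0) : ContDiffAt ℝ q u x :=
  hu.contDiffOn.contDiffAt (isOpen_compl_singleton.mem_nhds hx)

theorem norm_le (hu : IsSymbol q r A u) {x : E} (hx : x ≠ 0) : ‖u x‖ ≤ A * ‖x‖ ^ r := by
  simpa using hu.norm_iteratedFDeriv_le 0 q.zero_le x hx

theorem nonneg [Nontrivial E] (hu : IsSymbol q r A u) : 0 ≤ A := by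
  obtain ⟨x, hx⟩ := exists_ne (0 : E)
  exact nonneg_of_mul_nonneg_left ((norm_nonneg _).trans (hu.norm_le hx))
    (rpow_pos_of_pos (norm_pos_iff.2 hx) r)

theorem mul {r' A' : ℝ} {v : E → ℝ} (hu : IsSymbol q r A u) (hv : IsSymbol q r' A' v) :
    ∃ B, IsSymbol q (r + r') B (fun x => u x * v x) := by
  refine ⟨2 ^ q * (|A| * |A'|), hu.contDiffOn.mul hv.contDiffOn, fun k hk x hx => ?_⟩
  have hx0 : 0 < ‖x‖ := norm_pos_iff.2 hx
  have hwithin (w : E → ℝ) (i : ℕ) :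
      iteratedFDeriv ℝ i w x = iteratedFDerivWithin ℝ i w {0}ᶜ x :=
    (iteratedFDerivWithin_of_isOpen i isOpen_compl_singleton hx).symm
  have hterm : ∀ i ∈ Finset.range (k + 1),
      (k.choose i : ℝ) * ‖iteratedFDeriv ℝ i u x‖ * ‖iteratedFDeriv ℝ (k - i) v x‖ ≤
        k.choose i * (|A| * |A'| * ‖x‖ ^ (r + r' - k)) := by
    intro i hi
    have hik : i ≤ k := Nat.lt_succ_iff.1 (Finset.mem_range.1 hi)
    have hpow : ‖x‖ ^ (r + r' - k) = ‖x‖ ^ (r - i) * ‖x‖ ^ (r' - (k - i : ℕ)) := by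
      rw [← rpow_add hx0]; push_cast [hik]; congr 1; ring
    calc _ ≤ (k.choose i : ℝ) * (|A| * ‖x‖ ^ (r - i)) * (|A'| * ‖x‖ ^ (r' - (k - i : ℕ))) := by
          gcongr
          · exact (hu.norm_iteratedFDeriv_le i (hik.trans hk) x hx).trans
              (by gcongr; apply le_abs_self)
          · exact (hv.norm_iteratedFDeriv_le _ ((k.sub_le i).trans hk) x hx).trans
              (by gcongr; apply le_abs_self)
      _ = _ := by rw [hpow]; ring
  calc ‖iteratedFDeriv ℝ k (fun x => u x * v x) x‖
      ≤ ∑ i ∈ Finset.range (k + 1),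
        (k.choose i : ℝ) * ‖iteratedFDeriv ℝ i u x‖ * ‖iteratedFDeriv ℝ (k - i) v x‖ := by
        simp only [hwithin]
        exact norm_iteratedFDerivWithin_mul_le hu.contDiffOn hv.contDiffOn
          isOpen_compl_singleton.uniqueDiffOn hx (by exact_mod_cast hk)
    _ ≤ ∑ i ∈ Finset.range (k + 1), (k.choose i : ℝ) * (|A| * |A'| * ‖x‖ ^ (r + r' - k)) :=
        Finset.sum_le_sum hterm
    _ = 2 ^ k * (|A| * |A'|) * ‖x‖ ^ (r + r' - k) := by
        rw [← Finset.sum_mul, ← Nat.cast_sum, Nat.sum_range_choose]; push_cast; ring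
    _ ≤ 2 ^ q * (|A| * |A'|) * ‖x‖ ^ (r + r' - k) := by
        gcongr
        norm_num

theorem comp_smul (hu : IsSymbol q r A u) {h : ℝ} (hh : 0 < h) :
    IsSymbol q r (h ^ r * A) (fun x => u (h • x)) where
  contDiffOn := hu.contDiffOn.comp (contDiff_const_smul h).contDiffOn
    fun _ hx => smul_ne_zero hh.ne' hx
  norm_iteratedFDeriv_le k hk x hx := by
    rw [iteratedFDeriv_comp_smul_of_ne_zero hh.ne', norm_smul, norm_pow, norm_of_nonneg hh.le]
    calc h ^ k * ‖iteratedFDeriv ℝ k u (h • x)‖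
        ≤ h ^ k * (A * ‖h • x‖ ^ (r - k)) := by
          gcongr
          exact hu.norm_iteratedFDeriv_le k hk _ (smul_ne_zero hh.ne' hx)
      _ = h ^ r * A * ‖x‖ ^ (r - k) := by
          rw [norm_smul, norm_of_nonneg hh.le, mul_rpow hh.le (norm_nonneg x),
            rpow_sub hh, rpow_natCast]
          field_simp

end IsSymbol

namespace IsHomogeneousKernel

variable {ρ σ : ℝ} {s t : E → ℝ}

theorem mul (hs : IsHomogeneousKernel ρ s) (ht : IsHomogeneousKernel σ t) :
    IsHomogeneousKernel (ρ + σ) (fun x => s x * t x) where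
  contDiffOn q := (hs.contDiffOn q).mul (ht.contDiffOn q)
  map_smul a ha x := by rw [hs.map_smul a ha, ht.map_smul a ha, rpow_add ha]; ring

theorem iteratedFDeriv_smul (hs : IsHomogeneousKernel ρ s) {a : ℝ} (ha : 0 < a) (k : ℕ) {x : E}
    (hx : x ≠ 0) :
    a ^ k • iteratedFDeriv ℝ k s (a • x) = a ^ ρ • iteratedFDeriv ℝ k s x := by
  rw [← iteratedFDeriv_comp_smul_of_ne_zero ha.ne', funext (hs.map_smul a ha)]
  exact iteratedFDeriv_const_smul_apply' (a := a ^ ρ)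
    ((hs.contDiffOn k).contDiffAt (isOpen_compl_singleton.mem_nhds hx))

theorem exists_isSymbol [ProperSpace E] (hs : IsHomogeneousKernel ρ s) (q : ℕ) :
    ∃ A, IsSymbol q ρ A s := by
  have hcont (k : ℕ) : ContinuousOn (iteratedFDeriv ℝ k s) (Metric.sphere 0 1) := fun x hx =>
    (((hs.contDiffOn k).contDiffAt (isOpen_compl_singleton.mem_nhds
      (ne_zero_of_mem_unit_sphere ⟨x, hx⟩))).continuousAt_iteratedFDeriv le_rfl).continuousWithinAt
  choose B hB using fun k => (isCompact_sphere (0 : E) 1).exists_bound_of_continuousOn (hcont k)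
  refine ⟨∑ k ∈ Finset.range (q + 1), |B k|, hs.contDiffOn q, fun k hk x hx => ?_⟩
  have hx0 : 0 < ‖x‖ := norm_pos_iff.2 hx
  set y := ‖x‖⁻¹ • x
  have hy : ‖y‖ = 1 := norm_smul_inv_norm (𝕜 := ℝ) hx
  have hscale : ‖iteratedFDeriv ℝ k s x‖ = ‖x‖ ^ (ρ - k) * ‖iteratedFDeriv ℝ k s y‖ := by
    have h := congrArg norm (hs.iteratedFDeriv_smul hx0 k (norm_ne_zero_iff.1 (hy ▸ one_ne_zero)))
    rw [smul_inv_smul₀ hx0.ne', norm_smul, norm_smul, norm_pow, norm_norm,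
      norm_of_nonneg (rpow_nonneg hx0.le _)] at h
    rw [rpow_sub hx0, rpow_natCast, div_mul_eq_mul_div, eq_div_iff (by positivity), mul_comm, h]
  rw [hscale, mul_comm]
  gcongr
  calc ‖iteratedFDeriv ℝ k s y‖ ≤ |B k| := (hB k y (by simpa using hy)).trans (le_abs_self _)
    _ ≤ _ := Finset.single_le_sum (f := fun k => |B k|) (fun _ _ => abs_nonneg _)
        (Finset.mem_range.2 (Nat.lt_succ_of_le hk))

end IsHomogeneousKernel

end Symbols

section Taylor

variable {E F : Type*} [NormedAddCommGroup E] [NormedSpace ℝ E]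
  [NormedAddCommGroup F] [NormedSpace ℝ F]

theorem fderiv_iteratedFDeriv_apply {n : ℕ} {f : E → F} {x : E}
    (hf : ContDiffAt ℝ (n + 1 : ℕ) f x) (w : E) (v : Fin n → E) :
    fderiv ℝ (fun y => iteratedFDeriv ℝ n f y v) x w = fderiv ℝ (iteratedFDeriv ℝ n f) x w v := by
  have hd : DifferentiableAt ℝ (iteratedFDeriv ℝ n f) x :=
    hf.differentiableAt_iteratedFDeriv (by exact_mod_cast n.lt_succ_self)
  have heval := (ContinuousMultilinearMap.apply ℝ (fun _ : Fin n => E) F v).hasFDerivAt.comp x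
    hd.hasFDerivAt
  exact congrArg (· w) heval.fderiv

theorem iteratedFDeriv_succ_succ_apply {n : ℕ} {f : E → F} {x : E}
    (hf : ContDiffAt ℝ (n + 2 : ℕ) f x) (v : Fin (n + 2) → E) :
    iteratedFDeriv ℝ (n + 2) f x v =
      fderiv ℝ (fderiv ℝ (iteratedFDeriv ℝ n f)) x (v 0) (v 1) (Fin.tail (Fin.tail v)) := by
  have hd : DifferentiableAt ℝ (fderiv ℝ (iteratedFDeriv ℝ n f)) x :=
    ((hf.iteratedFDeriv_right (m := 2) (by push_cast; ring_nf; rfl)).fderiv_right (m := 1)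
      (by norm_num)).differentiableAt one_ne_zero
  rw [iteratedFDeriv_succ_apply_left, ← fderiv_iteratedFDeriv_apply hf,
    funext fun y => iteratedFDeriv_succ_apply_left (Fin.tail v)]
  have hv : HasFDerivAt (fun y => fderiv ℝ (iteratedFDeriv ℝ n f) y (v 1)) _ x :=
    hd.hasFDerivAt.clm_apply (hasFDerivAt_const (v 1) x)
  refine (congrArg (· (v 0)) ((ContinuousMultilinearMap.apply ℝ (fun _ : Fin n => E) F
    (Fin.tail (Fin.tail v))).hasFDerivAt.comp x hv).fderiv).trans ?_
  simp only [ContinuousLinearMap.comp_zero, zero_add]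
  rfl

theorem iteratedFDeriv_comp_swap_succ {n : ℕ} {f : E → F} {x : E}
    (hf : ContDiffAt ℝ (n + 1 : ℕ) f x) (i : Fin n) (v : Fin (n + 1) → E) :
    iteratedFDeriv ℝ (n + 1) f x (v ∘ Equiv.swap i.castSucc i.succ) =
      iteratedFDeriv ℝ (n + 1) f x v := by
  induction n generalizing x with
  | zero => exact i.elim0
  | succ n ih =>
    induction i using Fin.cases with
    | zero =>
      have hsymm : IsSymmSndFDerivAt ℝ (iteratedFDeriv ℝ n f) x :=
        (hf.iteratedFDeriv_right (m := 2) (by push_cast; ring_nf; rfl)).isSymmSndFDerivAt (by simp)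
      rw [iteratedFDeriv_succ_succ_apply hf, iteratedFDeriv_succ_succ_apply hf, hsymm]
      congr 2
    | succ j =>
      have hsmooth : ContDiffAt ℝ (n + 1 : ℕ) f x := hf.of_le (by exact_mod_cast (n + 1).le_succ)
      have htail : Fin.tail (v ∘ Equiv.swap j.succ.castSucc j.succ.succ) =
          Fin.tail v ∘ Equiv.swap j.castSucc j.succ := by
        ext1 k
        simp only [Fin.tail, Function.comp_apply, ← Fin.succ_castSucc]
        rw [← (Fin.succ_injective _).swap_apply]
      have hhead : (v ∘ Equiv.swap j.succ.castSucc j.succ.succ) 0 = v 0 := by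
        rw [Function.comp_apply, Equiv.swap_apply_of_ne_of_ne] <;>
          simp [Fin.ext_iff]
      have hnear : (fun y => iteratedFDeriv ℝ (n + 1) f y
            (Fin.tail v ∘ Equiv.swap j.castSucc j.succ)) =ᶠ[nhds x]
          fun y => iteratedFDeriv ℝ (n + 1) f y (Fin.tail v) :=
        (hsmooth.eventually (by simp)).mono fun y hy => ih hy j _
      rw [iteratedFDeriv_succ_apply_left, iteratedFDeriv_succ_apply_left, htail, hhead,
        ← fderiv_iteratedFDeriv_apply hf, hnear.fderiv_eq,
        fderiv_iteratedFDeriv_apply hf]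

theorem iteratedFDeriv_comp_perm_of_contDiffAt {n : ℕ} {f : E → F} {x : E}
    (hf : ContDiffAt ℝ n f x) (σ : Equiv.Perm (Fin n)) (v : Fin n → E) :
    iteratedFDeriv ℝ n f x (v ∘ σ) = iteratedFDeriv ℝ n f x v := by
  cases n with
  | zero => rw [Subsingleton.elim (v ∘ σ) v]
  | succ n =>
    have hσ : σ ∈ Submonoid.closure (Set.range fun i : Fin n => Equiv.swap i.castSucc i.succ) := by
      rw [Equiv.Perm.mclosure_swap_castSucc_succ]; trivial
    induction hσ using Submonoid.closure_induction generalizing v with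
    | mem τ hτ =>
      obtain ⟨i, rfl⟩ := hτ
      exact iteratedFDeriv_comp_swap_succ hf i v
    | one => rfl
    | mul τ τ' _ _ hτ hτ' => exact (hτ' (v ∘ τ)).trans (hτ v)

/-- The Taylor series of `u` at the origin, truncated to degrees less than `m`. -/
noncomputable def taylorSeries (m : ℕ) (u : E → ℝ) : FormalMultilinearSeries ℝ E ℝ :=
  fun k => if k < m then ((k.factorial : ℝ)⁻¹) • iteratedFDeriv ℝ k u 0 else 0

/-- The Taylor polynomial of `u` at the origin of degree less than `m`. -/
noncomputable def taylorPoly (m : ℕ) (u : E → ℝ) (x : E) : ℝ :=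
  ∑ k ∈ Finset.range m, (k.factorial : ℝ)⁻¹ * iteratedFDeriv ℝ k u 0 fun _ => x

variable {m : ℕ} {u v : E → ℝ}

theorem hasFiniteFPowerSeriesOnBall_taylorPoly (m : ℕ) (u : E → ℝ) :
    HasFiniteFPowerSeriesOnBall (taylorPoly m u) (taylorSeries m u) 0 m ⊤ :=
  .mk' (fun k hk => if_neg hk.not_gt) ENNReal.zero_lt_top fun y _ => by
    rw [zero_add, taylorPoly]
    refine Finset.sum_congr rfl fun k hk => ?_
    rw [taylorSeries, if_pos (Finset.mem_range.1 hk)]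
    rfl

theorem contDiff_taylorPoly (m : ℕ) (u : E → ℝ) {q : WithTop ℕ∞} :
    ContDiff ℝ q (taylorPoly m u) :=
  ContDiff.sum fun k _ => contDiff_const.mul
    ((iteratedFDeriv ℝ k u 0).contDiff.comp (contDiff_pi.2 fun _ => contDiff_id))

theorem iteratedFDeriv_taylorPoly {k : ℕ} (hk : k < m) (hu : ContDiffAt ℝ k u 0) :
    iteratedFDeriv ℝ k (taylorPoly m u) 0 = iteratedFDeriv ℝ k u 0 := by
  ext w
  rw [(hasFiniteFPowerSeriesOnBall_taylorPoly m u).toHasFPowerSeriesOnBall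
    |>.iteratedFDeriv_eq_sum_of_completeSpace]
  have hperm (σ : Equiv.Perm (Fin k)) : taylorSeries m u k (fun i => w (σ i)) =
      (k.factorial : ℝ)⁻¹ * iteratedFDeriv ℝ k u 0 w := by
    rw [taylorSeries, if_pos hk, ← iteratedFDeriv_comp_perm_of_contDiffAt hu σ w]
    rfl
  simp only [hperm, Finset.sum_const, Finset.card_univ, Fintype.card_perm, Fintype.card_fin,
    nsmul_eq_mul]
  rw [mul_inv_cancel_left₀ (by positivity)]

namespace VanishesToOrder

theorem sub (hu : ContDiff ℝ m u) (hv : ContDiff ℝ m v) (hu0 : VanishesToOrder m u)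
    (hv0 : VanishesToOrder m v) : VanishesToOrder m (fun x => u x - v x) := fun k hk => by
  have hkm : (k : WithTop ℕ∞) ≤ m := by exact_mod_cast hk.le
  rw [fun_iteratedFDeriv_sub_apply (hu.of_le hkm).contDiffAt (hv.of_le hkm).contDiffAt, hu0 k hk,
    hv0 k hk, sub_zero]

theorem mul_right (hu : ContDiff ℝ m u) (hv : ContDiff ℝ m v) (hu0 : VanishesToOrder m u) :
    VanishesToOrder m (fun x => u x * v x) := fun k hk => by
  have hbound := norm_iteratedFDeriv_mul_le hu hv 0 (n := k) (by exact_mod_cast hk.le)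
  refine norm_le_zero_iff.1 (hbound.trans_eq (Finset.sum_eq_zero fun i hi => ?_))
  rw [hu0 i ((Nat.lt_succ_iff.1 (Finset.mem_range.1 hi)).trans_lt hk), norm_zero, mul_zero,
    zero_mul]

theorem comp_smul {c : ℝ} (hc : c ≠ 0) (hu0 : VanishesToOrder m u) :
    VanishesToOrder m (fun x => u (c • x)) := fun k hk => by
  rw [iteratedFDeriv_comp_smul_of_ne_zero hc, smul_zero, hu0 k hk, smul_zero]

theorem norm_iteratedFDeriv_le {B r : ℝ} (hu : ContDiff ℝ m u) (hu0 : VanishesToOrder m u)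
    (hB : ∀ x ∈ Metric.closedBall 0 r, ‖iteratedFDeriv ℝ m u x‖ ≤ B) {k : ℕ} (hk : k ≤ m) {x : E}
    (hx : x ∈ Metric.closedBall 0 r) : ‖iteratedFDeriv ℝ k u x‖ ≤ B * ‖x‖ ^ (m - k) := by
  have hB0 : 0 ≤ B := (norm_nonneg _).trans (hB x hx)
  induction hk using Nat.decreasingInduction generalizing x with
  | self => simpa using hB x hx
  | of_succ k hk ih =>
    have hderiv : ∀ y ∈ Metric.closedBall (0 : E) ‖x‖,
        ‖fderiv ℝ (iteratedFDeriv ℝ k u) y‖ ≤ B * ‖x‖ ^ (m - (k + 1)) := fun y hy => by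
      rw [mem_closedBall_zero_iff] at hx hy
      rw [norm_fderiv_iteratedFDeriv]
      refine (ih (mem_closedBall_zero_iff.2 (hy.trans hx))).trans ?_
      gcongr
    have hdiff : Differentiable ℝ (iteratedFDeriv ℝ k u) :=
      hu.differentiable_iteratedFDeriv (by exact_mod_cast hk)
    have hmv := (convex_closedBall (0 : E) ‖x‖).norm_image_sub_le_of_norm_fderiv_le
      (fun y _ => hdiff y) hderiv (x := 0) (y := x) (by simp) (by simp)
    rwa [hu0 k hk, sub_zero, sub_zero, mul_assoc, ← pow_succ,
      show m - (k + 1) + 1 = m - k by omega] at hmv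

theorem isBigO (hu : ContDiff ℝ m u) (hu0 : VanishesToOrder m u) :
    u =O[nhds 0] fun x => ‖x‖ ^ m := by
  obtain ⟨r, hr, hB⟩ := Metric.eventually_nhds_iff_ball.1
    ((hu.continuous_iteratedFDeriv le_rfl).norm.continuousAt.eventually_le_const
      (lt_add_one ‖iteratedFDeriv ℝ m u 0‖))
  refine Asymptotics.IsBigO.of_bound (‖iteratedFDeriv ℝ m u 0‖ + 1) ?_
  filter_upwards [Metric.closedBall_mem_nhds (0 : E) (half_pos hr)] with x hx
  simpa using norm_iteratedFDeriv_le hu hu0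
    (fun y hy => hB y (Metric.closedBall_subset_ball (half_lt_self hr) hy)) m.zero_le hx

theorem sub_taylorPoly (hu : ContDiff ℝ m u) :
    VanishesToOrder m (fun x => u x - taylorPoly m u x) := fun k hk => by
  have hu' : ContDiffAt ℝ k u 0 := (hu.of_le (by exact_mod_cast hk.le)).contDiffAt
  rw [fun_iteratedFDeriv_sub_apply hu' (contDiff_taylorPoly m u).contDiffAt,
    iteratedFDeriv_taylorPoly hk hu', sub_self]

theorem exists_isSymbol {q : ℕ} (hmq : m ≤ q) (hu : ContDiff ℝ q u) (huc : HasCompactSupport u)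
    (hu0 : VanishesToOrder m u) : ∃ A, IsSymbol q m A u := by
  have hbdd (k : ℕ) (hk : k ≤ q) : ∃ B, ∀ x, ‖iteratedFDeriv ℝ k u x‖ ≤ B :=
    (hu.continuous_iteratedFDeriv (by exact_mod_cast hk)).bounded_above_of_compact_support
      (huc.iteratedFDeriv k)
  choose! B hB using hbdd
  obtain ⟨R, hR⟩ := huc.isBounded.subset_closedBall 0
  have hBnonneg (k : ℕ) (hk : k ≤ q) : 0 ≤ B k := (norm_nonneg _).trans (hB k hk 0)
  have hlow (k : ℕ) (hk : k ≤ m) (x : E) :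
      ‖iteratedFDeriv ℝ k u x‖ ≤ B m * ‖x‖ ^ ((m : ℝ) - k) := by
    rw [← Nat.cast_sub hk, rpow_natCast]
    exact norm_iteratedFDeriv_le (hu.of_le (by exact_mod_cast hmq)) hu0
      (fun y _ => hB m hmq y) hk (mem_closedBall_zero_iff.2 le_rfl)
  have hhigh (k : ℕ) (hmk : m ≤ k) (hk : k ≤ q) (x : E) (hx : x ≠ 0) :
      ‖iteratedFDeriv ℝ k u x‖ ≤ B k * |R| ^ (k - m) * ‖x‖ ^ ((m : ℝ) - k) := by
    by_cases hxs : x ∈ tsupport u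
    · have hx0 : 0 < ‖x‖ := norm_pos_iff.2 hx
      have hxR : ‖x‖ ≤ |R| := (mem_closedBall_zero_iff.1 (hR hxs)).trans (le_abs_self R)
      rw [← neg_sub, ← Nat.cast_sub hmk, rpow_neg hx0.le, rpow_natCast, ← div_eq_mul_inv,
        le_div_iff₀ (by positivity)]
      have := hBnonneg k hk
      gcongr
      exact hB k hk x
    · rw [Function.notMem_support.1 fun h => hxs (tsupport_iteratedFDeriv_subset k
        (subset_tsupport _ h)), norm_zero]
      have := hBnonneg k hk
      positivity
  refine ⟨B m + ∑ k ∈ Finset.range (q + 1), B k * |R| ^ (k - m), hu.contDiffOn,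
    fun k hk x hx => ?_⟩
  have hterm : ∀ i ∈ Finset.range (q + 1), 0 ≤ B i * |R| ^ (i - m) := fun i hi =>
    mul_nonneg (hBnonneg i (Nat.lt_succ_iff.1 (Finset.mem_range.1 hi))) (by positivity)
  rcases le_total k m with hkm | hmk
  · refine (hlow k hkm x).trans ?_
    gcongr
    exact le_add_of_nonneg_right (Finset.sum_nonneg hterm)
  · refine (hhigh k hmk hk x hx).trans ?_
    gcongr
    exact (Finset.single_le_sum hterm (Finset.mem_range.2 (Nat.lt_succ_of_le hk))).trans
      (le_add_of_nonneg_left (hBnonneg m hmq))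

end VanishesToOrder

end Taylor

section Cube

variable {n : ℕ} {V : Type*} [NormedAddCommGroup V] [NormedSpace ℝ V] {A B : ℝ}

local notation "cube" => Metric.closedBall (0 : Fin n → ℝ) (1 / 2)

theorem single_half_mem_cube (j : Fin n) : (Pi.single j (1 / 2) : Fin n → ℝ) ∈ cube := by
  simp [Pi.norm_single]

theorem norm_le_of_norm_apply_single_le {L : (Fin n → ℝ) →L[ℝ] V}
    (hL : ∀ j, ‖L (Pi.single j 1)‖ ≤ B) : ‖L‖ ≤ n * B := by
  have hB : 0 ≤ n * B := by
    simpa using Finset.sum_nonneg fun j (_ : j ∈ Finset.univ) => (norm_nonneg _).trans (hL j)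
  refine L.opNorm_le_bound hB fun v => ?_
  have hv : L v = ∑ j, v j • L (Pi.single j 1) := by
    conv_lhs => rw [pi_eq_sum_univ' v]
    simp [map_sum]
  calc ‖L v‖ ≤ ∑ j, ‖v j • L (Pi.single j 1)‖ := hv ▸ norm_sum_le _ _
    _ ≤ ∑ _j : Fin n, ‖v‖ * B := Finset.sum_le_sum fun j _ => by
        rw [norm_smul]
        gcongr
        exacts [norm_le_pi_norm v j, hL j]
    _ = n * B * ‖v‖ := by simp; ring

theorem norm_fderiv_le_of_jump_le {f : (Fin n → ℝ) → V}
    (hf : ∀ x ∈ cube, DifferentiableAt ℝ f x)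
    (hB : ∀ x ∈ cube, ∀ y ∈ cube, dist (fderiv ℝ f y) (fderiv ℝ f x) ≤ B)
    (hA : ∀ j, ‖f (Pi.single j (1 / 2)) - f (-Pi.single j (1 / 2))‖ ≤ A)
    {x : Fin n → ℝ} (hx : x ∈ cube) : ‖fderiv ℝ f x‖ ≤ n * (A + B) := by
  refine norm_le_of_norm_apply_single_le fun j => ?_
  have hneg : -Pi.single j (1 / 2) ∈ cube := by simpa using single_half_mem_cube j
  have hmv := (convex_closedBall _ _).norm_image_sub_le_of_norm_fderiv_le' hf
    (fun y hy => (dist_eq_norm _ _).symm.trans_le (hB x hx y hy)) hneg (single_half_mem_cube j)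
  rw [sub_neg_eq_add, ← Pi.single_add, add_halves, Pi.norm_single, norm_one, mul_one] at hmv
  exact (norm_le_norm_add_norm_sub _ _).trans (add_le_add (hA j) hmv)

theorem norm_iteratedFDeriv_le_of_jump_le {q : ℕ} {f : (Fin n → ℝ) → V} (hA : 0 ≤ A)
    (hf : ∀ x ∈ cube, ContDiffAt ℝ q f x) (hq : ∀ x ∈ cube, ‖iteratedFDeriv ℝ q f x‖ ≤ A)
    (hjump : ∀ k < q, ∀ j, ‖iteratedFDeriv ℝ k f (Pi.single j (1 / 2)) -
      iteratedFDeriv ℝ k f (-Pi.single j (1 / 2))‖ ≤ A)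
    {k : ℕ} (hk : k + 1 ≤ q) {x : Fin n → ℝ} (hx : x ∈ cube) :
    ‖iteratedFDeriv ℝ (k + 1) f x‖ ≤ (2 * n + 1) ^ (q - (k + 1)) * A := by
  obtain ⟨q, rfl⟩ : ∃ q', q = q' + 1 := ⟨q - 1, by omega⟩
  have hk' : k ≤ q := by omega
  rw [Nat.add_sub_add_right]
  clear hk
  induction hk' using Nat.decreasingInduction generalizing x with
  | self => simpa using hq x hx
  | of_succ k hk ih =>
    have hosc : ∀ y ∈ cube, ∀ z ∈ cube, dist (fderiv ℝ (iteratedFDeriv ℝ k f) z)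
        (fderiv ℝ (iteratedFDeriv ℝ k f) y) ≤ (2 * n + 1) ^ (q - (k + 1)) * A := fun y hy z hz => by
      rw [fderiv_iteratedFDeriv, Function.comp_apply, Function.comp_apply,
        LinearIsometryEquiv.dist_map, dist_eq_norm]
      refine ((convex_closedBall _ _).norm_image_sub_le_of_norm_fderiv_le (fun w hw =>
        (hf w hw).differentiableAt_iteratedFDeriv (by norm_cast; omega)) (fun w hw =>
        norm_fderiv_iteratedFDeriv.trans_le (ih hw)) hy hz).trans ?_
      refine mul_le_of_le_one_right (by positivity) ?_
      rw [← dist_eq_norm]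
      refine (dist_triangle_right z y 0).trans ?_
      linarith [Metric.mem_closedBall.1 hy, Metric.mem_closedBall.1 hz]
    have h := norm_fderiv_le_of_jump_le (fun y hy => (hf y hy).differentiableAt_iteratedFDeriv
      (by norm_cast; omega)) hosc (hjump k (by omega)) hx
    rw [norm_fderiv_iteratedFDeriv] at h
    refine h.trans ?_
    have hpow : (1 : ℝ) ≤ (2 * n + 1) ^ (q - (k + 1)) := one_le_pow₀ (by simp)
    rw [show q - k = q - (k + 1) + 1 by omega, pow_succ]
    nlinarith [mul_nonneg hA n.cast_nonneg (α := ℝ)]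

theorem norm_sub_le_of_jump_le {q : ℕ} {f : (Fin n → ℝ) → V} (hq0 : q ≠ 0) (hA : 0 ≤ A)
    (hf : ∀ x ∈ cube, ContDiffAt ℝ q f x) (hq : ∀ x ∈ cube, ‖iteratedFDeriv ℝ q f x‖ ≤ A)
    (hjump : ∀ k < q, ∀ j, ‖iteratedFDeriv ℝ k f (Pi.single j (1 / 2)) -
      iteratedFDeriv ℝ k f (-Pi.single j (1 / 2))‖ ≤ A)
    {x : Fin n → ℝ} (hx : x ∈ cube) : ‖f x - f 0‖ ≤ (2 * n + 1) ^ q * A := by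
  have hfderiv : ∀ y ∈ cube, ‖fderiv ℝ f y‖ ≤ (2 * n + 1) ^ (q - 1) * A := fun y hy => by
    rw [← norm_iteratedFDeriv_one]
    exact norm_iteratedFDeriv_le_of_jump_le hA hf hq hjump (by omega) hy
  calc ‖f x - f 0‖ ≤ (2 * n + 1) ^ (q - 1) * A * ‖x - 0‖ :=
        (convex_closedBall _ _).norm_image_sub_le_of_norm_fderiv_le
          (fun y hy => (hf y hy).differentiableAt (by exact_mod_cast hq0)) hfderiv (by simp) hx
    _ ≤ (2 * n + 1) ^ q * A * 1 := by
        gcongr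
        · linarith [n.cast_nonneg (α := ℝ)]
        · omega
        · rw [sub_zero]
          exact (mem_closedBall_zero_iff.1 hx).trans one_half_lt_one.le
    _ = _ := mul_one _

end Cube

section LatticeSum

variable {n : ℕ} {V : Type*} [NormedAddCommGroup V]

/-- The points of the lattice `ℤⁿ`, viewed in `ℝⁿ`. -/
def latticePoint (β : Fin n → ℤ) : Fin n → ℝ := fun j => β j

theorem norm_latticePoint (β : Fin n → ℤ) : ‖latticePoint β‖ = ‖β‖ := rfl

theorem latticePoint_zero : latticePoint (0 : Fin n → ℤ) = 0 := funext fun _ => Int.cast_zero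

theorem latticePoint_add (β γ : Fin n → ℤ) :
    latticePoint (β + γ) = latticePoint β + latticePoint γ := funext fun _ => Int.cast_add _ _

theorem latticePoint_single (j : Fin n) : latticePoint (Pi.single j 1) = Pi.single j 1 := by
  ext i
  rcases eq_or_ne i j with rfl | hij <;> simp [latticePoint, *]

theorem one_le_norm_latticePoint {β : Fin n → ℤ} (hβ : β ≠ 0) : 1 ≤ ‖latticePoint β‖ := by
  obtain ⟨j, hj⟩ := Function.ne_iff.1 hβ
  refine le_trans ?_ (norm_le_pi_norm (latticePoint β) j)
  rw [latticePoint, norm_eq_abs, ← Int.cast_abs]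
  exact_mod_cast Int.one_le_abs hj

theorem half_norm_latticePoint_le {β : Fin n → ℤ} (hβ : β ≠ 0) {y : Fin n → ℝ}
    (hy : ‖y‖ ≤ 1 / 2) : ‖latticePoint β‖ / 2 ≤ ‖latticePoint β + y‖ := by
  linarith [one_le_norm_latticePoint hβ, norm_sub_le_norm_add (latticePoint β) y]

theorem summable_norm_latticePoint_rpow {r : ℝ} (hr : r < -n) :
    Summable fun β : Fin n → ℤ => ‖latticePoint β‖ ^ r := by
  let b := Pi.basisFun ℝ (Fin n)
  have hrank : Module.finrank ℤ (Submodule.span ℤ (Set.range b)) = n := by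
    simp [Module.finrank_eq_card_basis (b.restrictScalars ℤ)]
  have hsum := ZLattice.summable_norm_rpow (Submodule.span ℤ (Set.range b)) r (by rwa [hrank])
  refine ((b.restrictScalars ℤ).equivFun.symm.toEquiv.summable_iff.2 hsum).congr fun β => ?_
  refine congrArg (fun x : Fin n → ℝ => ‖x‖ ^ r) (funext fun j => ?_)
  simp [b, latticePoint, Module.Basis.equivFun_symm_apply, Finset.sum_apply, Pi.single_apply]

/-- The sum of the translates of `v` by the nonzero points of `ℤⁿ`. -/
noncomputable def puncturedSum (v : (Fin n → ℝ) → V) (y : Fin n → ℝ) : V :=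
  ∑' β : {β : Fin n → ℤ // β ≠ 0}, v (latticePoint β.1 + y)

theorem finite_setOf_translate_ne_zero {v : (Fin n → ℝ) → V} (hv : HasCompactSupport v) (ρ : ℝ) :
    Set.Finite {β : Fin n → ℤ | ∃ y, ‖y‖ ≤ ρ ∧ v (latticePoint β + y) ≠ 0} := by
  obtain ⟨R, hR⟩ := hv.isBounded.subset_closedBall 0
  refine (isCompact_closedBall (0 : Fin n → ℤ) (R + ρ)).finite_of_discrete.subset ?_
  rintro β ⟨y, hy, hβ⟩
  have hβR := mem_closedBall_zero_iff.1 (hR (subset_tsupport v hβ))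
  rw [mem_closedBall_zero_iff, ← norm_latticePoint]
  linarith [norm_sub_le_norm_add (latticePoint β) y]

theorem exists_finset_puncturedSum_eq {v : (Fin n → ℝ) → V} (hv : HasCompactSupport v) (ρ : ℝ) :
    ∃ s : Finset {β : Fin n → ℤ // β ≠ 0}, ∀ y, ‖y‖ ≤ ρ →
      (∀ β ∉ s, v (latticePoint β.1 + y) = 0) ∧
      puncturedSum v y = ∑ β ∈ s, v (latticePoint β.1 + y) := by
  have hfin := (finite_setOf_translate_ne_zero hv ρ).preimage
    (Subtype.val_injective (p := fun β : Fin n → ℤ => β ≠ 0)).injOn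
  have hzero : ∀ y, ‖y‖ ≤ ρ → ∀ β ∉ hfin.toFinset, v (latticePoint β.1 + y) = 0 :=
    fun y hy β hβ => by_contra fun h => hβ (hfin.mem_toFinset.2 ⟨y, hy, h⟩)
  exact ⟨hfin.toFinset, fun y hy => ⟨hzero y hy, tsum_eq_sum (hzero y hy)⟩⟩

theorem summable_translates {v : (Fin n → ℝ) → V} (hv : HasCompactSupport v) (y : Fin n → ℝ) :
    Summable fun β => v (latticePoint β + y) :=
  summable_of_hasFiniteSupport <| (finite_setOf_translate_ne_zero hv ‖y‖).subset
    fun _ hβ => ⟨y, le_rfl, hβ⟩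

theorem puncturedSum_add_self [CompleteSpace V] {v : (Fin n → ℝ) → V}
    (hv : HasCompactSupport v) (y : Fin n → ℝ) :
    puncturedSum v y + v y = ∑' β, v (latticePoint β + y) := by
  have hzero := tsum_singleton 0 fun β : Fin n → ℤ => v (latticePoint β + y)
  rw [latticePoint_zero, zero_add] at hzero
  rw [← (summable_translates hv y).tsum_subtype_add_tsum_subtype_compl {0}, hzero, add_comm]
  rfl

theorem puncturedSum_jump [CompleteSpace V] {v : (Fin n → ℝ) → V}
    (hv : HasCompactSupport v) (j : Fin n) :
    puncturedSum v (Pi.single j (1 / 2)) - puncturedSum v (-Pi.single j (1 / 2)) =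
      v (-Pi.single j (1 / 2)) - v (Pi.single j (1 / 2)) := by
  have hshift (β : Fin n → ℤ) : latticePoint β + Pi.single j (1 / 2) =
      latticePoint (Equiv.addRight (Pi.single j 1) β) + -Pi.single j (1 / 2) := by
    rw [Equiv.coe_addRight, latticePoint_add, latticePoint_single, add_assoc, ← Pi.single_neg,
      ← Pi.single_add]
    norm_num
  have hperiod := (Equiv.addRight (Pi.single j 1 : Fin n → ℤ)).tsum_eq
    fun β => v (latticePoint β + -Pi.single j (1 / 2))
  simp only [← hshift] at hperiod
  rw [← puncturedSum_add_self hv, ← puncturedSum_add_self hv] at hperiod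
  rw [sub_eq_sub_iff_add_eq_add, hperiod, add_comm]

theorem latticePoint_add_ne_zero {β : Fin n → ℤ} (hβ : β ≠ 0) {y : Fin n → ℝ} (hy : ‖y‖ < 1) :
    latticePoint β + y ≠ 0 := fun h => by
  have := one_le_norm_latticePoint hβ
  rw [add_eq_zero_iff_eq_neg.1 h, norm_neg] at this
  exact this.not_gt hy

theorem contDiffAt_comp_latticePoint_add {q : ℕ} {u : (Fin n → ℝ) → ℝ}
    (hu : ContDiffOn ℝ q u {0}ᶜ) {y : Fin n → ℝ} (hy : ‖y‖ < 1) {β : Fin n → ℤ} (hβ : β ≠ 0) :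
    ContDiffAt ℝ q (fun z => u (latticePoint β + z)) y :=
  (hu.contDiffAt (isOpen_compl_singleton.mem_nhds (latticePoint_add_ne_zero hβ hy))).comp y
    (contDiffAt_const.add contDiffAt_id)

theorem exists_finset_puncturedSum_eventuallyEq {v : (Fin n → ℝ) → V} (hv : HasCompactSupport v)
    (y : Fin n → ℝ) : ∃ s : Finset {β : Fin n → ℤ // β ≠ 0},
      (∀ β ∉ s, (fun z => v (latticePoint β.1 + z)) =ᶠ[nhds y] fun _ => 0) ∧
      puncturedSum v =ᶠ[nhds y] fun z => ∑ β ∈ s, v (latticePoint β.1 + z) := by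
  obtain ⟨s, hs⟩ := exists_finset_puncturedSum_eq hv (‖y‖ + 1)
  have hnear : ∀ᶠ z in nhds y, ‖z‖ ≤ ‖y‖ + 1 :=
    (continuous_norm.continuousAt.eventually_lt continuousAt_const (lt_add_one ‖y‖)).mono
      fun _ => le_of_lt
  exact ⟨s, fun β hβ => hnear.mono fun z hz => (hs z hz).1 β hβ,
    hnear.mono fun z hz => (hs z hz).2⟩

theorem contDiffAt_puncturedSum {q : ℕ} {u : (Fin n → ℝ) → ℝ} (hu : ContDiffOn ℝ q u {0}ᶜ)
    (huc : HasCompactSupport u) {y : Fin n → ℝ} (hy : ‖y‖ < 1) :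
    ContDiffAt ℝ q (puncturedSum u) y := by
  obtain ⟨s, -, hsum⟩ := exists_finset_puncturedSum_eventuallyEq huc y
  exact (ContDiffAt.sum fun β _ =>
    contDiffAt_comp_latticePoint_add hu hy β.2).congr_of_eventuallyEq hsum

theorem iteratedFDeriv_puncturedSum {k : ℕ} {u : (Fin n → ℝ) → ℝ} (hu : ContDiffOn ℝ k u {0}ᶜ)
    (huc : HasCompactSupport u) {y : Fin n → ℝ} (hy : ‖y‖ < 1) :
    iteratedFDeriv ℝ k (puncturedSum u) y = puncturedSum (iteratedFDeriv ℝ k u) y := by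
  obtain ⟨s, hzero, hsum⟩ := exists_finset_puncturedSum_eventuallyEq huc y
  have houtside : ∀ β ∉ s, iteratedFDeriv ℝ k u (latticePoint β.1 + y) = 0 := fun β hβ => by
    rw [← iteratedFDeriv_comp_add_left, ((hzero β hβ).iteratedFDeriv ℝ k).eq_of_nhds]
    exact congrFun iteratedFDeriv_fun_zero y
  rw [(hsum.iteratedFDeriv ℝ k).eq_of_nhds, puncturedSum, tsum_eq_sum houtside,
    iteratedFDeriv_fun_sum_apply fun β _ => contDiffAt_comp_latticePoint_add hu hy β.2]
  simp only [iteratedFDeriv_comp_add_left]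

end LatticeSum

section UnitStep

variable {n q : ℕ} [NeZero n] {r A : ℝ} {u : (Fin n → ℝ) → ℝ}

theorem norm_iteratedFDeriv_puncturedSum_le (hq : r + n < q) (hu : IsSymbol q r A u)
    (huc : HasCompactSupport u) {y : Fin n → ℝ} (hy : ‖y‖ ≤ 1 / 2) :
    ‖iteratedFDeriv ℝ q (puncturedSum u) y‖ ≤
      A * ∑' β : {β : Fin n → ℤ // β ≠ 0}, (‖latticePoint β.1‖ / 2) ^ (r - q) := by
  have hA := hu.nonneg
  have hsummable : Summable fun β : {β : Fin n → ℤ // β ≠ 0} =>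
      (‖latticePoint β.1‖ / 2) ^ (r - q) := by
    refine (((summable_norm_latticePoint_rpow (r := r - q) (by linarith)).comp_injective
      Subtype.val_injective).div_const (2 ^ (r - q))).congr fun β => ?_
    rw [div_rpow (norm_nonneg _) zero_le_two]
    rfl
  rw [iteratedFDeriv_puncturedSum hu.contDiffOn huc (hy.trans_lt one_half_lt_one), puncturedSum,
    ← tsum_mul_left]
  refine tsum_of_norm_bounded (hsummable.mul_left A).hasSum fun β => ?_
  have hβ := half_norm_latticePoint_le β.2 hy
  have hβ1 := one_le_norm_latticePoint β.2
  refine (hu.norm_iteratedFDeriv_le q le_rfl _ (latticePoint_add_ne_zero β.2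
    (hy.trans_lt one_half_lt_one))).trans ?_
  gcongr A * ?_
  exact rpow_le_rpow_of_nonpos (by linarith) hβ (by linarith [n.cast_nonneg (α := ℝ)])

theorem norm_jump_puncturedSum_le {k : ℕ} (hu : IsSymbol q r A u) (huc : HasCompactSupport u)
    (hk : k ≤ q) (j : Fin n) :
    ‖iteratedFDeriv ℝ k (puncturedSum u) (Pi.single j (1 / 2)) -
      iteratedFDeriv ℝ k (puncturedSum u) (-Pi.single j (1 / 2))‖ ≤
      A * (2 * (1 / 2) ^ (r - q)) := by
  have hnorm : ‖(Pi.single j (1 / 2) : Fin n → ℝ)‖ = 1 / 2 := by simp [Pi.norm_single]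
  have hderiv (y : Fin n → ℝ) (hy : ‖y‖ = 1 / 2) :
      iteratedFDeriv ℝ k (puncturedSum u) y = puncturedSum (iteratedFDeriv ℝ k u) y ∧
        ‖iteratedFDeriv ℝ k u y‖ ≤ A * (1 / 2) ^ (r - q) := by
    refine ⟨iteratedFDeriv_puncturedSum (hu.contDiffOn.of_le (by exact_mod_cast hk)) huc
      (by linarith), ?_⟩
    have hy0 : y ≠ 0 := norm_ne_zero_iff.1 (by rw [hy]; norm_num)
    refine (hu.norm_iteratedFDeriv_le k hk y hy0).trans ?_
    rw [hy]
    refine mul_le_mul_of_nonneg_left (rpow_le_rpow_of_exponent_ge (by norm_num) (by norm_num) ?_)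
      hu.nonneg
    gcongr
  have hplus := hderiv _ hnorm
  have hminus := hderiv (-Pi.single j (1 / 2)) (by rw [norm_neg, hnorm])
  rw [hplus.1, hminus.1, puncturedSum_jump (huc.iteratedFDeriv k)]
  linarith [norm_sub_le (iteratedFDeriv ℝ k u (-Pi.single j (1 / 2)))
    (iteratedFDeriv ℝ k u (Pi.single j (1 / 2))), hplus.2, hminus.2]

theorem exists_norm_puncturedSum_sub_le (hr : -n < r) (hq : r + n < q) :
    ∃ C, ∀ (A : ℝ) (u : (Fin n → ℝ) → ℝ), IsSymbol q r A u → HasCompactSupport u →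
      ∀ y ∈ Metric.closedBall 0 (1 / 2), ‖puncturedSum u y - puncturedSum u 0‖ ≤ C * A := by
  set Z := ∑' β : {β : Fin n → ℤ // β ≠ 0}, (‖latticePoint β.1‖ / 2) ^ (r - q)
  set J : ℝ := 2 * (1 / 2) ^ (r - q)
  have hZ : 0 ≤ Z := tsum_nonneg fun β => by positivity
  have hJ : 0 ≤ J := by positivity
  have hq0 : q ≠ 0 := by
    rintro rfl
    push_cast at hq
    linarith
  refine ⟨(2 * n + 1) ^ q * (Z + J), fun A u hu huc y hy => ?_⟩
  have hA := hu.nonneg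
  rw [mul_assoc, mul_comm (Z + J)]
  refine norm_sub_le_of_jump_le hq0 (by positivity) (fun x hx => ?_) (fun x hx => ?_)
    (fun k hk j => ?_) hy
  · rw [mem_closedBall_zero_iff] at hx
    exact contDiffAt_puncturedSum hu.contDiffOn huc (hx.trans_lt one_half_lt_one)
  · refine (norm_iteratedFDeriv_puncturedSum_le hq hu huc (mem_closedBall_zero_iff.1 hx)).trans ?_
    gcongr
    exact le_add_of_nonneg_right hJ
  · refine (norm_jump_puncturedSum_le hu huc hk.le j).trans ?_
    gcongr
    exact le_add_of_nonneg_left hZ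

end UnitStep

section Cells

variable {n : ℕ}

/-- The half-open unit cube centred at the origin, a fundamental domain for `ℤⁿ`. Rounding
describes its translates uniformly: `x` lies in the one centred at the rounded `x`. -/
def unitCell (n : ℕ) : Set (Fin n → ℝ) := {x | ∀ j, round (x j) = 0}

theorem unitCell_eq_pi : unitCell n = Set.univ.pi fun _ => Set.Ico (-(1 / 2)) (1 / 2) := by
  ext x
  simp only [unitCell, Set.mem_ofPred_eq, round_eq_zero_iff, Set.mem_univ_pi]

theorem measurableSet_unitCell : MeasurableSet (unitCell n) :=
  unitCell_eq_pi ▸ MeasurableSet.univ_pi fun _ => measurableSet_Ico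

theorem volume_unitCell : volume (unitCell n) = 1 := by
  rw [unitCell_eq_pi, volume_pi_pi]
  norm_num

theorem norm_le_of_mem_unitCell {x : Fin n → ℝ} (hx : x ∈ unitCell n) : ‖x‖ ≤ 1 / 2 := by
  rw [unitCell_eq_pi, Set.mem_univ_pi] at hx
  exact (pi_norm_le_iff_of_nonneg one_half_pos.le).2 fun j => abs_le.2 ⟨(hx j).1, (hx j).2.le⟩

theorem hasSum_setIntegral_unitCell {u : (Fin n → ℝ) → ℝ} (hu : Integrable u) :
    HasSum (fun β => ∫ x in unitCell n, u (latticePoint β + x)) (∫ x, u x) := by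
  let cell (β : Fin n → ℤ) : Set (Fin n → ℝ) := {x | ∀ j, round (x j) = β j}
  have hpre (β : Fin n → ℤ) : (latticePoint β + ·) ⁻¹' cell β = unitCell n := by
    ext x
    simp [cell, unitCell, latticePoint]
  have hcell (β : Fin n → ℤ) : MeasurableSet (cell β) := by
    have hpi : cell β = Set.univ.pi fun j => Set.Ico (β j - 1 / 2 : ℝ) (β j + 1 / 2) := by
      ext x
      simp only [cell, Set.mem_ofPred_eq, round_eq_iff, Set.mem_univ_pi]
    exact hpi ▸ MeasurableSet.univ_pi fun _ => measurableSet_Ico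
  have hdisj : Pairwise (Function.onFun Disjoint cell) := fun β γ hβγ =>
    Set.disjoint_left.2 fun x hβ hγ => hβγ (funext fun j => (hβ j).symm.trans (hγ j))
  have huniv : ⋃ β, cell β = Set.univ :=
    Set.iUnion_eq_univ_iff.2 fun x => ⟨fun j => round (x j), fun _ => rfl⟩
  have hsum := hasSum_integral_iUnion hcell hdisj (hu.integrableOn (s := ⋃ β, cell β))
  rw [huniv, setIntegral_univ] at hsum
  have htranslate (β : Fin n → ℤ) :
      ∫ x in cell β, u x = ∫ x in unitCell n, u (latticePoint β + x) := by
    rw [← hpre β]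
    exact ((measurePreserving_add_left volume (latticePoint β)).setIntegral_preimage_emb
      (measurableEmbedding_addLeft _) u (cell β)).symm
  simpa only [htranslate] using hsum

theorem integrableOn_puncturedSum_unitCell {u : (Fin n → ℝ) → ℝ} (hu : Integrable u)
    (huc : HasCompactSupport u) : IntegrableOn (puncturedSum u) (unitCell n) := by
  obtain ⟨s, hs⟩ := exists_finset_puncturedSum_eq huc (1 / 2)
  exact (integrable_finsetSum s fun β _ =>
    (hu.comp_add_left (latticePoint β.1)).integrableOn).congr
      (ae_restrict_of_forall_mem measurableSet_unitCell fun y hy =>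
        (hs y (norm_le_of_mem_unitCell hy)).2.symm)

theorem integral_eq_setIntegral_unitCell_add {u : (Fin n → ℝ) → ℝ} (hu : Integrable u)
    (huc : HasCompactSupport u) :
    ∫ x, u x = (∫ x in unitCell n, u x) + ∫ x in unitCell n, puncturedSum u x := by
  obtain ⟨s, hs⟩ := exists_finset_puncturedSum_eq huc (1 / 2)
  have hon : ∀ y ∈ unitCell n, puncturedSum u y = ∑ β ∈ s, u (latticePoint β.1 + y) :=
    fun y hy => (hs y (norm_le_of_mem_unitCell hy)).2
  have hint (β : Fin n → ℤ) : IntegrableOn (fun y => u (latticePoint β + y)) (unitCell n) :=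
    (hu.comp_add_left (latticePoint β)).integrableOn
  have hsum := hasSum_setIntegral_unitCell hu
  have hfinite : ∑' β : {β : Fin n → ℤ // β ≠ 0}, ∫ x in unitCell n, u (latticePoint β.1 + x) =
      ∑ β ∈ s, ∫ x in unitCell n, u (latticePoint β.1 + x) := tsum_eq_sum fun β hβ =>
    setIntegral_eq_zero_of_forall_eq_zero fun y hy => (hs y (norm_le_of_mem_unitCell hy)).1 β hβ
  have horigin := tsum_singleton 0 fun β : Fin n → ℤ => ∫ x in unitCell n, u (latticePoint β + x)
  simp only [latticePoint_zero, zero_add] at horigin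
  rw [setIntegral_congr_fun measurableSet_unitCell hon, integral_finsetSum s fun β _ => hint β.1,
    ← hfinite, ← hsum.tsum_eq, ← hsum.summable.tsum_subtype_add_tsum_subtype_compl {0}, horigin]
  rfl

end Cells

section TrapError

variable {n : ℕ}

/-- The error of the punctured trapezoidal rule with step `h`. -/
noncomputable def trapError (h : ℝ) (f : (Fin n → ℝ) → ℝ) : ℝ := (∫ x, f x) - trap h f

theorem trap_eq_puncturedSum (h : ℝ) (f : (Fin n → ℝ) → ℝ) :
    trap h f = h ^ n * puncturedSum (fun x => f (h • x)) 0 := by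
  simp only [trap, puncturedSum, add_zero]
  refine congrArg (h ^ n * ·) (tsum_congr fun β => congrArg f (funext fun j => mul_comm _ _))

theorem trapError_eq_pow_mul {h : ℝ} (hh : 0 < h) (f : (Fin n → ℝ) → ℝ) :
    trapError h f = h ^ n * trapError 1 (fun x => f (h • x)) := by
  have hint := Measure.integral_comp_smul_of_nonneg volume f h (hR := hh.le)
  rw [Module.finrank_fin_fun, smul_eq_mul] at hint
  rw [trapError, trapError, hint, trap_eq_puncturedSum, trap_eq_puncturedSum]
  simp only [one_smul, one_pow, one_mul]
  field_simp

variable [NeZero n] {r : ℝ}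

theorem integrableOn_norm_rpow (hr : -n < r) (R : ℝ) :
    IntegrableOn (fun x : Fin n → ℝ => ‖x‖ ^ r) (Metric.closedBall 0 R) := by
  have hball : Metric.closedBall (0 : Fin n → ℝ) R = norm ⁻¹' Set.Iic R := by
    ext x
    simp
  have hcomp : (norm ⁻¹' Set.Iic R).indicator (fun x : Fin n → ℝ => ‖x‖ ^ r) =
      fun x => (Set.Iic R).indicator (fun t => t ^ r) ‖x‖ := rfl
  rw [hball, ← integrable_indicator_iff (measurable_norm measurableSet_Iic), hcomp,
    integrable_fun_norm_addHaar, Module.finrank_fin_fun]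
  have hpow : ∀ t ∈ Set.Ioi (0 : ℝ), (Set.Iic R).indicator (fun t => t ^ (r + (n - 1 : ℕ))) t =
      t ^ (n - 1) • (Set.Iic R).indicator (fun t => t ^ r) t := fun t ht => by
    by_cases htR : t ∈ Set.Iic R
    · rw [Set.indicator_of_mem htR, Set.indicator_of_mem htR, rpow_add ht, rpow_natCast, mul_comm,
        smul_eq_mul]
    · rw [Set.indicator_of_notMem htR, Set.indicator_of_notMem htR, smul_zero]
  refine IntegrableOn.congr_fun ?_ hpow measurableSet_Ioi
  rw [IntegrableOn, integrable_indicator_iff measurableSet_Iic, IntegrableOn,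
    Measure.restrict_restrict measurableSet_Iic, Set.inter_comm, Set.Ioi_inter_Iic]
  rcases le_total 0 R with hR | hR
  · refine (intervalIntegrable_iff_integrableOn_Ioc_of_le hR).1
      (intervalIntegral.intervalIntegrable_rpow' ?_)
    rw [Nat.cast_pred (NeZero.pos n)]
    linarith
  · rw [Set.Ioc_eq_empty hR.not_gt]
    exact Measure.restrict_empty ▸ integrable_zero_measure

variable {q : ℕ} {A : ℝ} {u : (Fin n → ℝ) → ℝ}

theorem IsSymbol.integrable (hu : IsSymbol q r A u) (hr : -n < r) (huc : HasCompactSupport u) :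
    Integrable u := by
  obtain ⟨R, hR⟩ := huc.isBounded.subset_closedBall 0
  have hae : ∀ᵐ x : Fin n → ℝ, x ≠ 0 := Measure.ae_ne volume 0
  have hmeas : AEStronglyMeasurable u := by
    rw [← Measure.restrict_eq_self_of_ae_mem (s := {0}ᶜ) hae]
    exact hu.contDiffOn.continuousOn.aestronglyMeasurable (measurableSet_singleton 0).compl
  refine IntegrableOn.integrable_of_forall_notMem_eq_zero (s := Metric.closedBall 0 R) ?_
    fun x hx => Function.notMem_support.1 fun h => hx (hR (subset_tsupport u h))
  refine ((integrableOn_norm_rpow hr R).const_mul A).mono' hmeas.restrict (ae_restrict_of_ae ?_)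
  filter_upwards [hae] with x hx using hu.norm_le hx

theorem exists_abs_trapError_one_le (hr : -n < r) (hq : r + n < q) :
    ∃ C, ∀ (A : ℝ) (u : (Fin n → ℝ) → ℝ), IsSymbol q r A u → HasCompactSupport u →
      |trapError 1 u| ≤ C * A := by
  obtain ⟨C, hC⟩ := exists_norm_puncturedSum_sub_le hr hq
  refine ⟨(∫ x in unitCell n, ‖x‖ ^ r) + C, fun A u hu huc => ?_⟩
  have hint := integrableOn_puncturedSum_unitCell (hu.integrable hr huc) huc
  have hsplit := integral_eq_setIntegral_unitCell_add (hu.integrable hr huc) huc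
  have hconst : ∫ _ in unitCell n, puncturedSum u 0 = trap 1 u := by
    simp [trap_eq_puncturedSum, Measure.real, volume_unitCell]
  have herror : trapError 1 u =
      (∫ x in unitCell n, u x) + ∫ x in unitCell n, (puncturedSum u x - puncturedSum u 0) := by
    rw [integral_sub hint (integrableOn_const (by simp [volume_unitCell])), hconst,
      trapError, hsplit, add_sub_assoc]
  have hnorm : IntegrableOn (fun x : Fin n → ℝ => ‖x‖ ^ r) (unitCell n) :=
    (integrableOn_norm_rpow hr (1 / 2)).mono_set fun x hx =>
      mem_closedBall_zero_iff.2 (norm_le_of_mem_unitCell hx)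
  have hcore : |∫ x in unitCell n, u x| ≤ (∫ x in unitCell n, ‖x‖ ^ r) * A := by
    rw [← norm_eq_abs, ← integral_mul_const]
    refine norm_integral_le_of_norm_le (hnorm.mul_const A) (ae_restrict_of_ae ?_)
    filter_upwards [Measure.ae_ne volume (0 : Fin n → ℝ)] with x hx
    exact (hu.norm_le hx).trans_eq (mul_comm _ _)
  have hosc : |∫ x in unitCell n, (puncturedSum u x - puncturedSum u 0)| ≤ C * A := by
    simpa [Measure.real, volume_unitCell] using norm_setIntegral_le_of_norm_le_const (C := C * A)
      (volume_unitCell.trans_lt ENNReal.one_lt_top) fun x hx =>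
        hC A u hu huc x (mem_closedBall_zero_iff.2 (norm_le_of_mem_unitCell hx))
  rw [herror, add_mul]
  exact (abs_add_le _ _).trans (add_le_add hcore hosc)

theorem IsSymbol.exists_abs_trapError_le (hu : IsSymbol q r A u) (huc : HasCompactSupport u)
    (hr : -n < r) (hq : r + n < q) :
    ∃ C, ∀ h > 0, |trapError h u| ≤ C * h ^ (r + n) := by
  obtain ⟨C, hC⟩ := exists_abs_trapError_one_le hr hq
  refine ⟨C * A, fun h hh => ?_⟩
  have hscaled := hC _ _ (hu.comp_smul hh) (huc.comp_smul hh.ne')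
  rw [trapError_eq_pow_mul hh, abs_mul, abs_of_pos (pow_pos hh n), rpow_add hh, rpow_natCast]
  calc _ ≤ h ^ n * (C * (h ^ r * A)) := by gcongr
    _ = _ := by ring

end TrapError

section TrapErrorAlgebra

variable {n : ℕ} {h : ℝ} {f g : (Fin n → ℝ) → ℝ}

theorem trapError_const_mul (c : ℝ) : trapError h (fun x => c * f x) = c * trapError h f := by
  simp only [trapError, trap, integral_const_mul, tsum_mul_left]
  ring

theorem summable_trap (hh : h ≠ 0) (hf : HasCompactSupport f) :
    Summable fun β : {β : Fin n → ℤ // β ≠ 0} => f fun j => β.1 j * h := by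
  refine ((summable_translates (hf.comp_smul hh) 0).comp_injective
    Subtype.val_injective).congr fun β => congrArg f (funext fun j => ?_)
  simp [latticePoint, mul_comm]

theorem trapError_add (hh : h ≠ 0) (hf : Integrable f) (hfc : HasCompactSupport f)
    (hg : Integrable g) (hgc : HasCompactSupport g) :
    trapError h (fun x => f x + g x) = trapError h f + trapError h g := by
  simp only [trapError, trap]
  rw [integral_add hf hg, (summable_trap hh hfc).tsum_add (summable_trap hh hgc)]
  ring

theorem trapError_dilate {c : ℝ} (hc : 0 < c) (hh : 0 < h) :
    c ^ n * trapError h (fun x => f (c • x)) = trapError (c * h) f := by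
  rw [trapError_eq_pow_mul hh, trapError_eq_pow_mul (mul_pos hc hh), mul_pow, mul_assoc]
  simp only [smul_smul]

/-- The reflection changing the sign of the `j`-th coordinate, on real or integer vectors. -/
def reflectCoord {R : Type*} [Neg R] (j : Fin n) (x : Fin n → R) : Fin n → R :=
  Function.update x j (-x j)

theorem reflectCoord_involutive {R : Type*} [InvolutiveNeg R] (j : Fin n) :
    Function.Involutive (reflectCoord j : (Fin n → R) → Fin n → R) := fun x => by
  simp [reflectCoord]

theorem measurePreserving_reflectCoord (j : Fin n) :
    MeasurePreserving (reflectCoord j : (Fin n → ℝ) → Fin n → ℝ) := by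
  have hcoord (i : Fin n) : MeasurePreserving (if i = j then Neg.neg else id : ℝ → ℝ) := by
    split_ifs
    exacts [Measure.measurePreserving_neg volume, MeasurePreserving.id volume]
  convert volume_preserving_pi hcoord using 3 with x i
  rcases eq_or_ne i j with rfl | hij <;> simp [reflectCoord, *]

theorem trapError_eq_zero_of_odd (j : Fin n) (hf : ∀ x, f (reflectCoord j x) = -f x) :
    trapError h f = 0 := by
  have hint : ∫ x, f x = 0 := by
    have hreflect := (measurePreserving_reflectCoord j).integral_comp
      (MeasurableEquiv.ofInvolutive _ (reflectCoord_involutive j)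
        (measurePreserving_reflectCoord j).measurable).measurableEmbedding f
    simp only [hf, integral_neg] at hreflect
    linarith
  have hne (β : Fin n → ℤ) : β ≠ 0 ↔ reflectCoord j β ≠ 0 := by
    have hzero : reflectCoord j (0 : Fin n → ℤ) = 0 := by simp [reflectCoord]
    rw [← (reflectCoord_involutive (R := ℤ) j).injective.ne_iff, hzero]
  let reflect : {β : Fin n → ℤ // β ≠ 0} ≃ {β : Fin n → ℤ // β ≠ 0} :=
    (reflectCoord_involutive (R := ℤ) j).toPerm.subtypeEquiv hne
  have hterm (β : {β : Fin n → ℤ // β ≠ 0}) :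
      f (fun i => (reflect β).1 i * h) = -f fun i => β.1 i * h := by
    rw [← hf]
    congr 1 with i
    change ((reflectCoord j β.1 i : ℤ) : ℝ) * h = _
    rcases eq_or_ne i j with rfl | hij <;> simp [reflectCoord, *]
  have htrap := reflect.tsum_eq fun β => f fun i => β.1 i * h
  simp only [hterm, tsum_neg] at htrap
  rw [trapError, trap, hint, self_eq_neg.1 htrap.symm, mul_zero, sub_zero]

end TrapErrorAlgebra

section Limit

theorem exists_limit_of_dilation_le {M : ℝ → ℝ} {m : ℕ} (hm : m ≠ 0)
    (hM : ∀ c > 0, ∃ C, ∀ h > 0, |M h - M (c * h)| ≤ C * h ^ m) :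
    ∃ L C, ∀ h > 0, |M h - L| ≤ C * h ^ m := by
  obtain ⟨C, hC⟩ := hM (1 / 2) one_half_pos
  have hC0 : 0 ≤ C := by simpa using (abs_nonneg _).trans (hC 1 one_pos)
  have hstep {h : ℝ} (hh : 0 < h) (k : ℕ) :
      dist (M (h * (1 / 2) ^ k)) (M (h * (1 / 2) ^ (k + 1))) ≤ 2 * C * h ^ m / 2 / 2 ^ k := by
    have hdyadic : ((1 / 2 : ℝ) ^ k) ^ m ≤ (1 / 2) ^ k := by
      rw [← pow_mul]
      exact pow_le_pow_of_le_one (by norm_num) (by norm_num)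
        (Nat.le_mul_of_pos_right k (Nat.pos_of_ne_zero hm))
    rw [dist_eq_norm, norm_eq_abs, pow_succ', mul_left_comm]
    calc _ ≤ C * (h * (1 / 2) ^ k) ^ m := hC _ (by positivity)
      _ ≤ C * (h ^ m * (1 / 2) ^ k) := by rw [mul_pow]; gcongr
      _ = _ := by rw [one_div, inv_pow]; ring
  obtain ⟨L, hL⟩ := cauchySeq_tendsto_of_complete (cauchySeq_of_le_geometric_two (hstep one_pos))
  refine ⟨L, 2 * C, fun h hh => ?_⟩
  obtain ⟨D, hD⟩ := hM h hh
  have hclose : Filter.Tendsto (fun k : ℕ => M (1 * (1 / 2) ^ k) - M (h * (1 / 2) ^ k))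
      Filter.atTop (nhds 0) := by
    have hzero : Filter.Tendsto (fun k : ℕ => D * ((1 / 2 : ℝ) ^ k) ^ m) Filter.atTop (nhds 0) := by
      simpa [hm] using ((tendsto_pow_atTop_nhds_zero_of_lt_one (r := (1 / 2 : ℝ)) (by norm_num)
        (by norm_num)).pow m).const_mul D
    refine squeeze_zero_norm (fun k => ?_) hzero
    rw [one_mul]
    exact hD _ (by positivity)
  have hLh : Filter.Tendsto (fun k : ℕ => M (h * (1 / 2) ^ k)) Filter.atTop (nhds L) := by
    simpa using hL.sub hclose
  simpa [dist_eq_norm] using dist_le_of_le_geometric_two_of_tendsto₀ (hstep hh) hLh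

end Limit

section Moments

variable {n m : ℕ} {ρ : ℝ} {s g u : (Fin n → ℝ) → ℝ}

theorem IsHomogeneousKernel.exists_isSymbol_mul {q : ℕ} (hs : IsHomogeneousKernel ρ s)
    (hmq : m ≤ q) (hu : ContDiff ℝ q u) (huc : HasCompactSupport u) (hu0 : VanishesToOrder m u) :
    ∃ A, IsSymbol q (m + ρ) A (fun x => u x * s x) := by
  obtain ⟨A, hA⟩ := hu0.exists_isSymbol hmq hu huc
  obtain ⟨B, hB⟩ := hs.exists_isSymbol q
  exact hA.mul hB

variable [NeZero n]

theorem IsHomogeneousKernel.integrable_mul (hs : IsHomogeneousKernel ρ s) (hρ : -n < ρ)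
    (hu : Continuous u) (huc : HasCompactSupport u) : Integrable fun x => u x * s x := by
  obtain ⟨A, hA⟩ := hs.exists_isSymbol_mul (Nat.zero_le 0) (contDiff_zero.2 hu) huc
    fun k hk => absurd hk k.not_lt_zero
  rw [Nat.cast_zero, zero_add] at hA
  exact hA.integrable hρ huc.mul_right

theorem IsHomogeneousKernel.exists_abs_trapError_mul_le {q : ℕ} (hs : IsHomogeneousKernel ρ s)
    (hρ : -n < ρ) (hmq : m ≤ q) (hq : m + ρ + n < q) (hu : ContDiff ℝ q u)
    (huc : HasCompactSupport u) (hu0 : VanishesToOrder m u) :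
    ∃ C, ∀ h > 0, |trapError h fun x => u x * s x| ≤ C * h ^ (m + ρ + n) := by
  obtain ⟨A, hA⟩ := hs.exists_isSymbol_mul hmq hu huc hu0
  exact hA.exists_abs_trapError_le huc.mul_right (by linarith [m.cast_nonneg (α := ℝ)]) hq

theorem exists_moment_limit (hs : IsHomogeneousKernel ρ s) (hρ : -n < ρ) (hm : m ≠ 0)
    (hg : ContDiff ℝ (⊤ : ℕ∞) g) (hgc : HasCompactSupport g)
    (hg1 : VanishesToOrder m fun x => g x - 1) :
    ∃ L C, ∀ h > 0, |h ^ (-(ρ + n)) * trapError h (fun x => g x * s x) - L| ≤ C * h ^ m := by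
  refine exists_limit_of_dilation_le hm fun c hc => ?_
  have hsmooth (q : ℕ) : ContDiff ℝ q g := hg.of_le (by exact_mod_cast le_top)
  have hsmooth_dilate (q : ℕ) : ContDiff ℝ q fun x => g (c • x) :=
    (hsmooth q).comp (contDiff_const_smul c)
  have hgc_dilate : HasCompactSupport fun x => g (c • x) := hgc.comp_smul hc.ne'
  have hflat : VanishesToOrder m fun x => g x - g (c • x) := by
    simpa using VanishesToOrder.sub ((hsmooth m).sub contDiff_const)
      ((hsmooth_dilate m).sub contDiff_const) hg1 (hg1.comp_smul hc.ne')
  obtain ⟨q, hq⟩ := exists_nat_gt (m + |ρ + n|)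
  have hmq : m ≤ q := by exact_mod_cast (le_add_of_nonneg_right (abs_nonneg (ρ + n))).trans hq.le
  obtain ⟨C, hC⟩ := hs.exists_abs_trapError_mul_le hρ hmq (by linarith [le_abs_self (ρ + n)])
    ((hsmooth q).sub (hsmooth_dilate q)) (hgc.sub hgc_dilate) hflat
  refine ⟨C, fun h hh => ?_⟩
  have hdilate : (c * h) ^ (-(ρ + n)) * trapError (c * h) (fun x => g x * s x) =
      h ^ (-(ρ + n)) * trapError h (fun x => g (c • x) * s x) := by
    simp only [← trapError_dilate hc hh, hs.map_smul c hc, mul_left_comm _ (c ^ ρ),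
      trapError_const_mul]
    rw [mul_rpow hc.le hh.le, neg_add, rpow_add hc, rpow_neg hc.le, rpow_neg hc.le, rpow_natCast]
    field_simp
  have hsplit : trapError h (fun x => g x * s x) =
      trapError h (fun x => (g x - g (c • x)) * s x) + trapError h fun x => g (c • x) * s x := by
    have hg_dilate := (hsmooth_dilate 0).continuous
    rw [← trapError_add (f := fun x => (g x - g (c • x)) * s x) hh.ne'
      (hs.integrable_mul hρ (hg.continuous.sub hg_dilate) (hgc.sub hgc_dilate))
      (hgc.sub hgc_dilate).mul_right (hs.integrable_mul hρ hg_dilate hgc_dilate)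
      hgc_dilate.mul_right]
    simp only [← add_mul, sub_add_cancel]
  rw [hdilate, hsplit, ← mul_sub, add_sub_cancel_right, abs_mul,
    abs_of_pos (rpow_pos_of_pos hh _)]
  calc _ ≤ h ^ (-(ρ + n)) * (C * h ^ (m + ρ + n)) := by gcongr; exact hC h hh
    _ = C * h ^ m := by
      rw [mul_left_comm, ← rpow_add hh, ← rpow_natCast h m]
      ring_nf

end Moments

section MultiIndex

variable {n : ℕ}

/-- The multi-index power `x ^ γ`. -/
def multiPow (γ : Fin n → ℕ) (x : Fin n → ℝ) : ℝ := ∏ j, x j ^ γ j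

theorem contDiff_multiPow (γ : Fin n → ℕ) {q : WithTop ℕ∞} : ContDiff ℝ q (multiPow γ) := by
  unfold multiPow
  fun_prop

theorem multiPow_smul (γ : Fin n → ℕ) (t : ℝ) (x : Fin n → ℝ) :
    multiPow γ (t • x) = t ^ (∑ j, γ j) * multiPow γ x := by
  simp only [multiPow, Pi.smul_apply, smul_eq_mul, mul_pow, Finset.prod_mul_distrib,
    Finset.prod_pow_eq_pow_sum]

theorem isHomogeneousKernel_multiPow (γ : Fin n → ℕ) :
    IsHomogeneousKernel (∑ j, γ j : ℕ) (multiPow γ) where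
  contDiffOn _ := (contDiff_multiPow γ).contDiffOn
  map_smul t _ x := by rw [multiPow_smul, rpow_natCast]

theorem multiPow_reflectCoord_of_odd {γ : Fin n → ℕ} {j : Fin n} (hj : Odd (γ j))
    (x : Fin n → ℝ) : multiPow γ (reflectCoord j x) = -multiPow γ x := by
  rw [multiPow, multiPow, ← Finset.mul_prod_erase _ _ (Finset.mem_univ j),
    ← Finset.mul_prod_erase _ _ (Finset.mem_univ j), ← neg_mul]
  congr 1
  · simp [reflectCoord, hj.neg_pow]
  · refine Finset.prod_congr rfl fun i hi => ?_
    simp [reflectCoord, Finset.ne_of_mem_erase hi]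

theorem taylorPoly_mem_span_multiPow (m : ℕ) (u : (Fin n → ℝ) → ℝ) :
    taylorPoly m u ∈ Submodule.span ℝ (multiPow '' {γ | ∑ j, γ j < m}) := by
  have hsum : taylorPoly m u = ∑ k ∈ Finset.range m, ∑ w : Fin k → Fin n,
      ((k.factorial : ℝ)⁻¹ * iteratedFDeriv ℝ k u 0 fun i => Pi.single (w i) 1) •
        multiPow fun j => Finset.card {i | w i = j} := by
    ext x
    simp only [taylorPoly, Finset.sum_apply, Pi.smul_apply, smul_eq_mul, mul_assoc,
      ← Finset.mul_sum]
    refine Finset.sum_congr rfl fun k _ => congrArg _ ?_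
    conv_lhs => rw [pi_eq_sum_univ' x, ContinuousMultilinearMap.map_sum]
    refine Finset.sum_congr rfl fun w _ => ?_
    rw [ContinuousMultilinearMap.map_smul_univ, smul_eq_mul, mul_comm, multiPow,
      ← Finset.prod_fiberwise' Finset.univ w x]
    simp only [Finset.prod_const]
  rw [hsum]
  refine Submodule.sum_mem _ fun k hk => Submodule.sum_mem _ fun w _ =>
    Submodule.smul_mem _ _ (Submodule.subset_span ⟨_, ?_, rfl⟩)
  have hcard := Finset.card_eq_sum_card_fiberwise (f := w) (s := Finset.univ) (t := Finset.univ)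
    fun i _ => Finset.mem_univ _
  rw [Finset.card_univ, Fintype.card_fin] at hcard
  exact hcard.symm.trans_lt (Finset.mem_range.1 hk)

end MultiIndex

section PartialDerivatives

variable {n : ℕ} {f : (Fin n → ℝ) → ℝ}

theorem contDiff_pd (hf : ContDiff ℝ (⊤ : ℕ∞) f) (j : Fin n) : ContDiff ℝ (⊤ : ℕ∞) (pd j f) :=
  (hf.fderiv_right (by simp)).clm_apply contDiff_const

theorem pd_comm (hf : ContDiff ℝ 2 f) (i j : Fin n) : pd i (pd j f) = pd j (pd i f) := by
  have hsecond (i j : Fin n) (x : Fin n → ℝ) : pd i (pd j f) x =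
      fderiv ℝ (fderiv ℝ f) x (Pi.single i 1) (Pi.single j 1) := by
    have hd : DifferentiableAt ℝ (fderiv ℝ f) x :=
      (hf.fderiv_right (m := 1) (by norm_num)).differentiable one_ne_zero x
    change fderiv ℝ (fun y => fderiv ℝ f y (Pi.single j 1)) x (Pi.single i 1) = _
    rw [fderiv_clm_apply hd (differentiableAt_const _)]
    simp
  ext x
  rw [hsecond, hsecond, (hf.contDiffAt.isSymmSndFDerivAt (by simp))]

theorem contDiff_foldr_pd (hf : ContDiff ℝ (⊤ : ℕ∞) f) (L : List (Fin n)) :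
    ContDiff ℝ (⊤ : ℕ∞) (L.foldr pd f) := by
  induction L with
  | nil => exact hf
  | cons j L ih => exact contDiff_pd ih j

theorem foldr_pd_eq_of_perm (hf : ContDiff ℝ (⊤ : ℕ∞) f) {L L' : List (Fin n)} (hL : L.Perm L') :
    L.foldr pd f = L'.foldr pd f := by
  induction hL with
  | nil => rfl
  | cons j _ ih => exact congrArg (pd j) ih
  | swap i j L =>
    exact pd_comm (contDiff_infty.1 (contDiff_foldr_pd hf L) 2) j i
  | trans _ _ ih ih' => exact ih.trans ih'

theorem md_eq_foldr_pd (γ : Fin n → ℕ) :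
    md γ f = ((List.finRange n).flatMap fun j => List.replicate (γ j) j).foldr pd f := by
  rw [md, List.foldr_flatMap]
  have hiterate (j : Fin n) (k : ℕ) (g : (Fin n → ℝ) → ℝ) :
      (pd j)^[k] g = (List.replicate k j).foldr pd g := by
    induction k with
    | zero => rfl
    | succ k ih => rw [Function.iterate_succ_apply', ih, List.replicate_succ, List.foldr_cons]
  simp only [hiterate]

theorem foldr_pd_eq_md (hf : ContDiff ℝ (⊤ : ℕ∞) f) (L : List (Fin n)) :
    L.foldr pd f = md (fun j => L.count j) f := by
  rw [md_eq_foldr_pd]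
  refine foldr_pd_eq_of_perm hf (List.perm_iff_count.2 fun j => ?_)
  simp only [List.count_flatMap, Function.comp_def, List.count_replicate, beq_iff_eq]
  rw [← Fin.sum_univ_def, Finset.sum_ite_eq' Finset.univ j, if_pos (Finset.mem_univ j)]

theorem iteratedFDeriv_apply_single (hf : ContDiff ℝ (⊤ : ℕ∞) f) {k : ℕ} (w : Fin k → Fin n)
    (x : Fin n → ℝ) : iteratedFDeriv ℝ k f x (fun i => Pi.single (w i) 1) =
      (List.ofFn w).foldr pd f x := by
  induction k generalizing x with
  | zero => simp
  | succ k ih =>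
    rw [iteratedFDeriv_succ_apply_left, List.ofFn_succ, List.foldr_cons, pd,
      ← funext (ih fun i => w i.succ),
      fderiv_iteratedFDeriv_apply (hf.contDiffAt.of_le (by exact_mod_cast le_top))]
    rfl

theorem iteratedFDeriv_eq_zero_of_md_eq_zero (hf : ContDiff ℝ (⊤ : ℕ∞) f) {k : ℕ}
    {x : Fin n → ℝ} (hmd : ∀ γ : Fin n → ℕ, ∑ j, γ j = k → md γ f x = 0) :
    iteratedFDeriv ℝ k f x = 0 := by
  refine ContinuousMultilinearMap.toMultilinearMap_injective
    (Module.Basis.ext_multilinear (fun _ => Pi.basisFun ℝ (Fin n)) fun w => ?_)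
  simp only [Pi.basisFun_apply]
  refine (iteratedFDeriv_apply_single hf w x).trans ?_
  rw [foldr_pd_eq_md hf]
  refine hmd _ ?_
  simpa using Multiset.sum_count_eq_card (s := Finset.univ) (m := (List.ofFn w : Multiset (Fin n)))
    fun j _ => Finset.mem_univ j

theorem vanishesToOrder_sub_const {m : ℕ} {a : ℝ} (hf : ContDiff ℝ (⊤ : ℕ∞) f) (hf0 : f 0 = a)
    (hfd : ∀ γ : Fin n → ℕ, 1 ≤ ∑ j, γ j → ∑ j, γ j < m → md γ f 0 = 0) :
    VanishesToOrder m fun x => f x - a := fun k hk => by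
  rcases k with _ | k
  · ext
    simp [hf0]
  · rw [fun_iteratedFDeriv_sub_apply (contDiff_infty.1 hf _).contDiffAt contDiffAt_const,
      iteratedFDeriv_succ_const, Pi.zero_apply, sub_zero]
    exact iteratedFDeriv_eq_zero_of_md_eq_zero hf fun γ hγ => hfd γ (by omega) (by omega)

end PartialDerivatives

section MomentMatrix

variable {ι : Type*} {ξ : ι → ℕ × ℕ}

/-- The matrix `K` of the on-diagonal moment system. -/
def momentMatrix (ξ : ι → ℕ × ℕ) : Matrix ι ι ℝ :=
  Matrix.of fun i j => ∑ β ∈ Gon (ξ j), (β.1 : ℝ) ^ (2 * (ξ i).1) * (β.2 : ℝ) ^ (2 * (ξ i).2)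

theorem mem_Gon_iff {γ : ℕ × ℕ} {β : ℤ × ℤ} :
    β ∈ Gon γ ↔ β.1.natAbs = γ.1 ∧ β.2.natAbs = γ.2 := by
  simp only [Gon, Finset.mem_insert, Finset.mem_singleton, Int.natAbs_eq_iff, Prod.ext_iff]
  tauto

theorem sq_eq_of_mem_Gon {γ : ℕ × ℕ} {β : ℤ × ℤ} (hβ : β ∈ Gon γ) :
    (β.1 : ℝ) ^ 2 = (γ.1 : ℝ) ^ 2 ∧ (β.2 : ℝ) ^ 2 = (γ.2 : ℝ) ^ 2 := by
  obtain ⟨h₁, h₂⟩ := mem_Gon_iff.1 hβ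
  simp only [← h₁, ← h₂, Nat.cast_natAbs, Int.cast_abs, sq_abs, and_self]

theorem card_Gon_ne_zero (γ : ℕ × ℕ) : (Gon γ).card ≠ 0 :=
  (Finset.insert_nonempty _ _).card_ne_zero

theorem momentMatrix_apply (i j : ι) : momentMatrix ξ i j =
    (Gon (ξ j)).card * ((((ξ j).1 : ℝ) ^ 2) ^ (ξ i).1 * (((ξ j).2 : ℝ) ^ 2) ^ (ξ i).2) := by
  rw [momentMatrix, Matrix.of_apply, ← nsmul_eq_mul]
  refine Finset.sum_eq_card_nsmul fun β hβ => ?_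
  rw [pow_mul, pow_mul, (sq_eq_of_mem_Gon hβ).1, (sq_eq_of_mem_Gon hβ).2]

variable [Fintype ι] {p : ℕ}

/-- The Newton basis polynomial of degree `a` for the nodes `0², 1², 2², …`. -/
noncomputable def squareNewton (a : ℕ) : Polynomial ℝ :=
  ∏ k ∈ Finset.range a, (Polynomial.X - Polynomial.C ((k : ℝ) ^ 2))

theorem eval_squareNewton_eq_zero_iff {a n : ℕ} :
    (squareNewton a).eval ((n : ℝ) ^ 2) = 0 ↔ n < a := by
  simp only [squareNewton, Polynomial.eval_prod, Finset.prod_eq_zero_iff, Finset.mem_range,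
    Polynomial.eval_sub, Polynomial.eval_X, Polynomial.eval_C, sub_eq_zero]
  constructor
  · rintro ⟨k, hk, hnk⟩
    rwa [(sq_eq_sq₀ n.cast_nonneg k.cast_nonneg).1 hnk |> Nat.cast_injective]
  · exact fun hn => ⟨n, hn, rfl⟩

theorem natDegree_squareNewton (a : ℕ) : (squareNewton a).natDegree = a := by
  rw [squareNewton, Polynomial.natDegree_finsetProd_X_sub_C_eq_card, Finset.card_range]

theorem sum_mul_eval_mul_eval_eq_zero {R : Type*} [CommSemiring R] {w x y : ι → R}
    (hw : ∀ a b, a + b ≤ p → ∑ j, w j * (x j ^ a * y j ^ b) = 0) {P Q : Polynomial R}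
    (hPQ : P.natDegree + Q.natDegree ≤ p) : ∑ j, w j * (P.eval (x j) * Q.eval (y j)) = 0 := by
  have hexpand (j : ι) : w j * (P.eval (x j) * Q.eval (y j)) =
      ∑ a ∈ Finset.range (P.natDegree + 1), ∑ b ∈ Finset.range (Q.natDegree + 1),
        P.coeff a * Q.coeff b * (w j * (x j ^ a * y j ^ b)) := by
    rw [Polynomial.eval_eq_sum_range, Polynomial.eval_eq_sum_range, Finset.sum_mul_sum]
    simp only [Finset.mul_sum]
    exact Finset.sum_congr rfl fun a _ => Finset.sum_congr rfl fun b _ => by ring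
  simp only [hexpand]
  rw [Finset.sum_comm]
  refine Finset.sum_eq_zero fun a ha => ?_
  rw [Finset.sum_comm]
  refine Finset.sum_eq_zero fun b hb => ?_
  rw [Finset.mem_range] at ha hb
  rw [← Finset.mul_sum, hw a b (by omega), mul_zero]

/-- Testing against products of Newton polynomials makes the system triangular, with `ξ j` ordered
by decreasing total degree. -/
theorem eq_zero_of_forall_sum_mul_sq_pow_eq_zero (hξinj : Function.Injective ξ)
    (hξmem : ∀ i, (ξ i).1 + (ξ i).2 ≤ p) {w : ι → ℝ}
    (hw : ∀ a b, a + b ≤ p →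
      ∑ j, w j * ((((ξ j).1 : ℝ) ^ 2) ^ a * (((ξ j).2 : ℝ) ^ 2) ^ b) = 0) : w = 0 := by
  funext j₀
  induction hk : p - ((ξ j₀).1 + (ξ j₀).2) using Nat.strong_induction_on generalizing j₀ with
  | _ k ih =>
    have hsum := sum_mul_eval_mul_eval_eq_zero hw (P := squareNewton (ξ j₀).1)
      (Q := squareNewton (ξ j₀).2) (by simpa only [natDegree_squareNewton] using hξmem j₀)
    rw [Finset.sum_eq_single_of_mem j₀ (Finset.mem_univ _) fun j _ hj => ?_] at hsum
    · simpa [eval_squareNewton_eq_zero_iff] using hsum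
    by_cases hlt : (ξ j).1 < (ξ j₀).1 ∨ (ξ j).2 < (ξ j₀).2
    · rcases hlt with hlt | hlt <;> simp [eval_squareNewton_eq_zero_iff.2 hlt]
    · have hne := mt Prod.ext_iff.2 (hξinj.ne hj)
      have := hξmem j
      rw [ih _ (by omega) j rfl, Pi.zero_apply, zero_mul]

theorem isUnit_det_momentMatrix [DecidableEq ι] (hξinj : Function.Injective ξ)
    (hξmem : ∀ i, (ξ i).1 + (ξ i).2 ≤ p) (hξsurj : ∀ γ : ℕ × ℕ, γ.1 + γ.2 ≤ p → ∃ i, ξ i = γ) :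
    IsUnit (momentMatrix ξ).det := by
  rw [isUnit_iff_ne_zero]
  intro hdet
  obtain ⟨v, hv, hKv⟩ := Matrix.exists_mulVec_eq_zero_iff.2 hdet
  have hw : (fun j => v j * (Gon (ξ j)).card) = 0 := by
    refine eq_zero_of_forall_sum_mul_sq_pow_eq_zero hξinj hξmem fun a b hab => ?_
    obtain ⟨i, hi⟩ := hξsurj (a, b) hab
    refine Eq.trans ?_ (congrFun hKv i)
    refine Finset.sum_congr rfl fun j _ => ?_
    change _ = momentMatrix ξ i j * v j
    rw [momentMatrix_apply, hi]
    ring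
  refine hv (funext fun j => ?_)
  exact (mul_eq_zero.1 (congrFun hw j)).resolve_right (Nat.cast_ne_zero.2 (card_Gon_ne_zero _))

end MomentMatrix

section Perturbation

open Asymptotics Filter

variable {ι X : Type*} [Fintype ι] {l : Filter X} {K : Matrix ι ι ℝ}
  {d c w : X → ι → ℝ} {cbar : ι → ℝ} {η : X → ℝ}

theorem isBigO_mulVec (A : Matrix ι ι ℝ) (hc : c =O[l] η) :
    (fun x => A.mulVec (c x)) =O[l] η :=
  ((A.mulVecLin.toContinuousLinearMap).isBigO_comp c l).trans hc

variable [DecidableEq ι]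

theorem isBigO_mulVec_mul_sub (hK : IsUnit K.det) (hd : (fun x => d x - 1) =O[l] η)
    (hc : (fun x => c x - cbar) =O[l] η) :
    (fun x => K.mulVec (d x * K⁻¹.mulVec cbar) - c x) =O[l] η := by
  have hsplit (x : X) : K.mulVec (d x * K⁻¹.mulVec cbar) - c x =
      K.mulVec ((d x - 1) * K⁻¹.mulVec cbar) - (c x - cbar) := by
    rw [sub_mul, one_mul, Matrix.mulVec_sub, Matrix.mulVec_mulVec, Matrix.mul_nonsing_inv K hK,
      Matrix.one_mulVec, sub_sub_sub_cancel_right]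
  simp only [hsplit]
  refine (isBigO_mulVec K ?_).sub hc
  simpa using hd.mul (isBigO_const_const (K⁻¹.mulVec cbar) (one_ne_zero (α := ℝ)) l)

theorem isBigO_sub_inv_mulVec (hK : IsUnit K.det) (hη : Tendsto η l (nhds 0))
    (hd : (fun x => d x - 1) =O[l] η) (hc : (fun x => c x - cbar) =O[l] η)
    (hw : ∀ᶠ x in l, (K * Matrix.diagonal (d x)).mulVec (w x) = c x) :
    (fun x => w x - K⁻¹.mulVec cbar) =O[l] η := by
  have hhalf : ∀ᶠ x in l, ‖d x - 1‖ ≤ 1 / 2 :=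
    (hd.trans_tendsto hη).norm.eventually_le_const (by norm_num)
  have hres := isBigO_mulVec K⁻¹ (isBigO_mulVec_mul_sub hK hd hc)
  refine IsBigO.trans (IsBigO.of_bound 2 ?_) hres
  filter_upwards [hw, hhalf] with x hx hdx
  have hdiag : K⁻¹.mulVec (K.mulVec (d x * K⁻¹.mulVec cbar) - c x) =
      d x * (K⁻¹.mulVec cbar - w x) := by
    rw [← hx, ← Matrix.mulVec_mulVec, ← Matrix.mulVec_sub, Matrix.mulVec_mulVec,
      Matrix.nonsing_inv_mul K hK, Matrix.one_mulVec, mul_sub]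
    congr 1
    ext j
    rw [Matrix.mulVec_diagonal, Pi.mul_apply]
  have hsplit : w x - K⁻¹.mulVec cbar =
      (d x - 1) * (K⁻¹.mulVec cbar - w x) - d x * (K⁻¹.mulVec cbar - w x) := by ring
  rw [hdiag]
  have hle : ‖w x - K⁻¹.mulVec cbar‖ ≤ 1 / 2 * ‖w x - K⁻¹.mulVec cbar‖ +
      ‖d x * (K⁻¹.mulVec cbar - w x)‖ := by
    conv_lhs => rw [hsplit]
    refine (norm_sub_le _ _).trans (add_le_add_left ((norm_mul_le _ _).trans ?_) _)
    rw [norm_sub_rev (K⁻¹.mulVec cbar)]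
    gcongr
  linarith

end Perturbation

section GridPoints

open Asymptotics Filter

variable {γ : ℕ × ℕ} {h : ℝ} {u : (Fin 2 → ℝ) → ℝ}

theorem gridPt_eq_smul (β : ℤ × ℤ) (h : ℝ) : gridPt β h = h • ![(β.1 : ℝ), (β.2 : ℝ)] := by
  simp only [gridPt, Matrix.smul_cons, Matrix.smul_empty, smul_eq_mul, mul_comm h]

theorem gridPt_neg_fst (a b : ℤ) (h : ℝ) :
    gridPt (-a, b) h = reflectCoord 0 (gridPt (a, b) h) := by
  ext i
  fin_cases i <;> simp [gridPt, reflectCoord]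

theorem gridPt_neg_snd (a b : ℤ) (h : ℝ) :
    gridPt (a, -b) h = reflectCoord 1 (gridPt (a, b) h) := by
  ext i
  fin_cases i <;> simp [gridPt, reflectCoord]

theorem apply_gridPt_of_mem_Gon {β : ℤ × ℤ} (hu : ∀ j x, u (reflectCoord j x) = u x)
    (hβ : β ∈ Gon γ) : u (gridPt β h) = u (gridPt (γ.1, γ.2) h) := by
  simp only [Gon, Finset.mem_insert, Finset.mem_singleton] at hβ
  rcases hβ with rfl | rfl | rfl | rfl <;> simp only [gridPt_neg_fst, gridPt_neg_snd, hu]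

theorem sum_Gon_eq_zero_of_odd (j : Fin 2) (hu : ∀ x, u (reflectCoord j x) = -u x) :
    ∑ β ∈ Gon γ, u (gridPt β h) = 0 := by
  rw [← self_eq_neg, ← Finset.sum_neg_distrib]
  obtain rfl | rfl : j = 0 ∨ j = 1 := by omega
  · refine Finset.sum_nbij' (fun β => (-β.1, β.2)) (fun β => (-β.1, β.2)) ?_ ?_ ?_ ?_ ?_ <;>
      simp [mem_Gon_iff, gridPt_neg_fst, hu]
  · refine Finset.sum_nbij' (fun β => (β.1, -β.2)) (fun β => (β.1, -β.2)) ?_ ?_ ?_ ?_ ?_ <;>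
      simp [mem_Gon_iff, gridPt_neg_snd, hu]

theorem VanishesToOrder.isBigO_gridPt {m : ℕ} (hu : ContDiff ℝ m u) (hu0 : VanishesToOrder m u)
    (β : ℤ × ℤ) : (fun h => u (gridPt β h)) =O[nhds 0] fun h : ℝ => h ^ m := by
  have hgrid : Tendsto (gridPt β) (nhds 0) (nhds 0) := by
    have hcont : Continuous (gridPt β) := by
      rw [funext (gridPt_eq_smul β)]
      fun_prop
    simpa [gridPt_eq_smul] using hcont.tendsto 0
  refine ((hu0.isBigO hu).comp_tendsto hgrid).trans ?_
  have hlin : gridPt β =O[nhds 0] fun h : ℝ => h := by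
    refine IsBigO.of_bound ‖![(β.1 : ℝ), (β.2 : ℝ)]‖ (Eventually.of_forall fun h => ?_)
    rw [gridPt_eq_smul, norm_smul, mul_comm]
  exact hlin.norm_left.pow m

end GridPoints

section OnDiagonalKernel

variable {α : ℝ}

theorem sOn_eq_mul_rpow (α : ℝ) (x : Fin 2 → ℝ) :
    sOn α x = x 0 ^ 2 * (x 0 ^ 2 + x 1 ^ 2) ^ (-(2 + α) / 2) := by
  have hsum : 0 ≤ x 0 ^ 2 + x 1 ^ 2 := by positivity
  rw [sOn, euclNorm, Fin.sum_univ_two, sqrt_eq_rpow, ← rpow_mul hsum, div_eq_mul_inv,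
    ← rpow_neg hsum]
  ring_nf

theorem isHomogeneousKernel_sOn (α : ℝ) : IsHomogeneousKernel (-α) (sOn α) where
  contDiffOn q := by
    rw [funext (sOn_eq_mul_rpow α)]
    have hsum : ContDiff ℝ q fun x : Fin 2 → ℝ => x 0 ^ 2 + x 1 ^ 2 := by fun_prop
    have hcoord : ContDiff ℝ q fun x : Fin 2 → ℝ => x 0 ^ 2 := by fun_prop
    refine hcoord.contDiffOn.mul (hsum.contDiffOn.rpow_const_of_ne fun x hx hzero => hx ?_)
    rw [Set.mem_singleton_iff, funext_iff, Fin.forall_fin_two]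
    have hcoord_sq : x 0 ^ 2 = 0 ∧ x 1 ^ 2 = 0 :=
      (add_eq_zero_iff_of_nonneg (sq_nonneg _) (sq_nonneg _)).1 hzero
    exact hcoord_sq.imp eq_zero_of_pow_eq_zero eq_zero_of_pow_eq_zero
  map_smul t ht x := by
    have hsum : 0 ≤ x 0 ^ 2 + x 1 ^ 2 := by positivity
    simp only [sOn_eq_mul_rpow, Pi.smul_apply, smul_eq_mul, mul_pow, ← mul_add]
    have hpow : (t ^ 2) ^ (-(2 + α) / 2) * t ^ 2 = t ^ (-α) := by
      rw [← rpow_natCast, ← rpow_mul ht.le, ← rpow_add ht]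
      push_cast
      ring_nf
    rw [mul_rpow (sq_nonneg t) hsum, ← hpow]
    ring

theorem euclNorm_reflectCoord {n : ℕ} (j : Fin n) (x : Fin n → ℝ) :
    euclNorm (reflectCoord j x) = euclNorm x := by
  rw [euclNorm, euclNorm]
  refine congrArg _ (Finset.sum_congr rfl fun i _ => ?_)
  obtain rfl | hij := eq_or_ne i j
  · simp [reflectCoord]
  · simp [reflectCoord, hij]

theorem sOn_reflectCoord (j : Fin 2) (x : Fin 2 → ℝ) : sOn α (reflectCoord j x) = sOn α x := by
  rw [sOn, sOn, euclNorm_reflectCoord]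
  fin_cases j <;> simp [reflectCoord]

end OnDiagonalKernel

section OneSidedBounds

open Asymptotics Filter Topology

theorem exists_forall_abs_le_of_isBigO_nhdsGT_zero {f k : ℝ → ℝ} (hf : f =O[𝓝[>] 0] k)
    (hk : ∀ h > 0, 0 ≤ k h) :
    ∃ C > (0 : ℝ), ∃ h₁ > (0 : ℝ), ∀ h : ℝ, 0 < h → h < h₁ → |f h| ≤ C * k h := by
  obtain ⟨C, hC, hbound⟩ := hf.exists_pos
  obtain ⟨h₁, hh₁, hsub⟩ := mem_nhdsGT_iff_exists_Ioo_subset.1 hbound.bound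
  refine ⟨C, hC, h₁, hh₁, fun h hh hlt => ?_⟩
  have := hsub ⟨hh, hlt⟩
  rwa [Set.mem_ofPred_eq, norm_eq_abs, norm_of_nonneg (hk h hh)] at this

theorem isBigO_sqrt_sum_sq {ι X : Type*} [Fintype ι] {l : Filter X} {f : X → ι → ℝ} {k : X → ℝ}
    (hf : f =O[l] k) : (fun x => √(∑ i, f x i ^ 2)) =O[l] k := by
  have hnorm : ∀ x, ‖(EuclideanSpace.equiv ι ℝ).symm (f x)‖ = √(∑ i, f x i ^ 2) := fun x => by
    simp [EuclideanSpace.norm_eq]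
  simp only [← hnorm]
  exact (((EuclideanSpace.equiv ι ℝ).symm.isBigO_comp f l).trans hf).norm_left

end OneSidedBounds

section CorrectedRule

open Asymptotics Filter Topology

variable {ι : Type*} [Fintype ι] {m p q : ℕ} {α : ℝ} {s g u v φ : (Fin 2 → ℝ) → ℝ}
  {ξ : ι → ℕ × ℕ} {w : ι → ℝ} {h : ℝ}

/-- The error of the corrected rule with weights `w` for the integrand `u * s`, where `s` is
homogeneous of degree `-α`. -/
noncomputable def correctedError (α : ℝ) (s : (Fin 2 → ℝ) → ℝ) (ξ : ι → ℕ × ℕ) (w : ι → ℝ)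
    (h : ℝ) (u : (Fin 2 → ℝ) → ℝ) : ℝ :=
  trapError h (fun x => u x * s x) - h ^ (2 - α) * ∑ i, w i * ∑ β ∈ Gon (ξ i), u (gridPt β h)

theorem correctedError_add (hα : α < 2) (hs : IsHomogeneousKernel (-α) s) (hh : h ≠ 0)
    (hu : Continuous u) (huc : HasCompactSupport u) (hv : Continuous v)
    (hvc : HasCompactSupport v) : correctedError α s ξ w h (fun x => u x + v x) =
      correctedError α s ξ w h u + correctedError α s ξ w h v := by
  have hρ : -((2 : ℕ) : ℝ) < -α := by push_cast; linarith
  simp only [correctedError, add_mul, trapError_add hh (hs.integrable_mul hρ hu huc)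
    huc.mul_right (hs.integrable_mul hρ hv hvc) hvc.mul_right, Finset.sum_add_distrib, mul_add]
  ring

theorem correctedError_const_mul (c : ℝ) :
    correctedError α s ξ w h (fun x => c * u x) = c * correctedError α s ξ w h u := by
  simp only [correctedError, mul_assoc, trapError_const_mul, ← Finset.mul_sum,
    mul_left_comm _ c, mul_sub]

theorem correctedError_eq_zero_of_odd (hs : ∀ j x, s (reflectCoord j x) = s x) (j : Fin 2)
    (hu : ∀ x, u (reflectCoord j x) = -u x) : correctedError α s ξ w h u = 0 := by
  rw [correctedError, trapError_eq_zero_of_odd j fun x => by rw [hu, hs, neg_mul]]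
  simp only [sum_Gon_eq_zero_of_odd j hu, mul_zero, Finset.sum_const_zero, sub_zero]

theorem isBigO_correctedError_of_vanishesToOrder {q : ℕ} (hα : α < 2)
    (hs : IsHomogeneousKernel (-α) s) (hmq : m ≤ q) (hq : m + 2 - α < q) (hu : ContDiff ℝ q u)
    (huc : HasCompactSupport u) (hu0 : VanishesToOrder m u) :
    (fun h => correctedError α s ξ w h u) =O[𝓝[>] 0] fun h => h ^ (m + 2 - α) := by
  have hrate : (m : ℝ) + -α + (2 : ℕ) = m + 2 - α := by push_cast; ring
  obtain ⟨C, hC⟩ := hs.exists_abs_trapError_mul_le (by push_cast; linarith) hmq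
    (hrate.trans_lt hq) hu huc hu0
  refine IsBigO.sub (IsBigO.of_bound C ?_) ?_
  · filter_upwards [self_mem_nhdsWithin] with h hh
    rw [norm_of_nonneg (rpow_nonneg (le_of_lt hh) _)]
    exact hrate ▸ hC h hh
  · have hgrid : (fun h => ∑ i, w i * ∑ β ∈ Gon (ξ i), u (gridPt β h)) =O[𝓝[>] 0]
        fun h : ℝ => h ^ m :=
      IsBigO.fun_sum fun i _ => (IsBigO.fun_sum fun β _ =>
        (hu0.isBigO_gridPt (hu.of_le (by exact_mod_cast hmq)) β).mono
          nhdsWithin_le_nhds).const_mul_left (w i)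
    refine ((isBigO_refl (fun h : ℝ => h ^ (2 - α)) _).mul hgrid).congr' (.refl _ _) ?_
    filter_upwards [self_mem_nhdsWithin] with h hh
    rw [← rpow_natCast, ← rpow_add hh]
    congr 1
    ring

/-- The right-hand side `c(h)` of the on-diagonal moment system. -/
noncomputable def correctionMoment (α : ℝ) (s g : (Fin 2 → ℝ) → ℝ) (ξ : ι → ℕ × ℕ) (h : ℝ)
    (i : ι) : ℝ :=
  h ^ (-(2 * (((ξ i).1 : ℝ) + ((ξ i).2 : ℝ)) + 2 - α)) *
    trapError h fun x => g x * s x * x 0 ^ (2 * (ξ i).1) * x 1 ^ (2 * (ξ i).2)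

/-- The diagonal of the matrix `G(h)` of the on-diagonal moment system. -/
noncomputable def cutoffDiagonal (g : (Fin 2 → ℝ) → ℝ) (ξ : ι → ℕ × ℕ) (h : ℝ) (j : ι) : ℝ :=
  g (gridPt ((ξ j).1, (ξ j).2) h)

theorem exists_isBigO_correctionMoment_sub (hα : α < 2) (hs : IsHomogeneousKernel (-α) s)
    (hm : m ≠ 0) (hg : ContDiff ℝ (⊤ : ℕ∞) g) (hgc : HasCompactSupport g)
    (hg1 : VanishesToOrder m fun x => g x - 1) :
    ∃ cbar, (fun h => correctionMoment α s g ξ h - cbar) =O[𝓝[>] 0] fun h => h ^ m := by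
  have hlimit (i : ι) : ∃ L C : ℝ, ∀ h > 0, |correctionMoment α s g ξ h i - L| ≤ C * h ^ m := by
    have hkernel := hs.mul (isHomogeneousKernel_multiPow ![2 * (ξ i).1, 2 * (ξ i).2])
    have hρ : -((2 : ℕ) : ℝ) < -α + (∑ j, ![2 * (ξ i).1, 2 * (ξ i).2] j : ℕ) := by
      rw [Nat.cast_two]
      linarith [Nat.cast_nonneg (α := ℝ) (∑ j, ![2 * (ξ i).1, 2 * (ξ i).2] j)]
    obtain ⟨L, C, hL⟩ := exists_moment_limit hkernel hρ hm hg hgc hg1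
    refine ⟨L, C, fun h hh => ?_⟩
    convert hL h hh using 3
    simp only [correctionMoment, multiPow, Fin.sum_univ_two, Fin.prod_univ_two,
      Matrix.cons_val_zero, Matrix.cons_val_one, mul_assoc]
    congr 2
    push_cast
    ring
  choose cbar C hC using hlimit
  refine ⟨cbar, isBigO_pi.2 fun i => IsBigO.of_bound (C i) ?_⟩
  filter_upwards [self_mem_nhdsWithin] with h hh
  rw [norm_of_nonneg (pow_nonneg (le_of_lt hh) m)]
  exact hC i h hh

theorem isBigO_cutoffDiagonal_sub_one (hg : ContDiff ℝ m g)
    (hg1 : VanishesToOrder m fun x => g x - 1) :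
    (fun h => cutoffDiagonal g ξ h - 1) =O[𝓝[>] 0] fun h => h ^ m :=
  isBigO_pi.2 fun _ =>
    (hg1.isBigO_gridPt (hg.sub contDiff_const) _).mono nhdsWithin_le_nhds

theorem correctedError_cutoff_mul_multiPow (hg_even : ∀ j x, g (reflectCoord j x) = g x)
    (hh : 0 < h) (i : ι) :
    correctedError α s ξ w h (fun x => g x * multiPow ![2 * (ξ i).1, 2 * (ξ i).2] x) =
      -(h ^ (2 * (((ξ i).1 : ℝ) + ((ξ i).2 : ℝ)) + 2 - α) *
        ((momentMatrix ξ).mulVec (cutoffDiagonal g ξ h * w) - correctionMoment α s g ξ h) i) := by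
  have htrap : trapError h (fun x => g x * multiPow ![2 * (ξ i).1, 2 * (ξ i).2] x * s x) =
      h ^ (2 * (((ξ i).1 : ℝ) + ((ξ i).2 : ℝ)) + 2 - α) * correctionMoment α s g ξ h i := by
    rw [correctionMoment, ← mul_assoc, ← rpow_add hh, add_neg_cancel, rpow_zero, one_mul]
    congr 1
    ext x
    simp only [multiPow, Fin.prod_univ_two, Matrix.cons_val_zero, Matrix.cons_val_one]
    ring
  have hscale (β : ℤ × ℤ) : multiPow ![2 * (ξ i).1, 2 * (ξ i).2] (gridPt β h) =
      h ^ (2 * ((ξ i).1 + (ξ i).2)) * ((β.1 : ℝ) ^ (2 * (ξ i).1) * (β.2 : ℝ) ^ (2 * (ξ i).2)) := by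
    rw [gridPt_eq_smul, multiPow_smul]
    simp [multiPow, mul_add]
  have hgrid : ∑ j, w j * ∑ β ∈ Gon (ξ j),
      g (gridPt β h) * multiPow ![2 * (ξ i).1, 2 * (ξ i).2] (gridPt β h) =
        h ^ (2 * ((ξ i).1 + (ξ i).2)) * (momentMatrix ξ).mulVec (cutoffDiagonal g ξ h * w) i := by
    simp only [Matrix.mulVec, dotProduct, momentMatrix, Matrix.of_apply, Finset.mul_sum,
      Finset.sum_mul, Pi.mul_apply, cutoffDiagonal]
    refine Finset.sum_congr rfl fun j _ => Finset.sum_congr rfl fun β hβ => ?_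
    rw [hscale, apply_gridPt_of_mem_Gon hg_even hβ]
    ring
  have hpow : h ^ (2 * (((ξ i).1 : ℝ) + ((ξ i).2 : ℝ)) + 2 - α) =
      h ^ (2 - α) * h ^ (2 * ((ξ i).1 + (ξ i).2)) := by
    rw [← rpow_natCast, ← rpow_add hh]
    push_cast
    congr 1
    ring
  rw [correctedError, htrap, hgrid, hpow, Pi.sub_apply]
  ring

theorem isBigO_correctedError_cutoff_mul_multiPow (hs : ∀ j x, s (reflectCoord j x) = s x)
    (hg : ∀ j x, g (reflectCoord j x) = g x)
    (hξsurj : ∀ γ : ℕ × ℕ, γ.1 + γ.2 ≤ p → ∃ i, ξ i = γ)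
    (hres : (fun h => (momentMatrix ξ).mulVec (cutoffDiagonal g ξ h * w) -
      correctionMoment α s g ξ h) =O[𝓝[>] 0] fun h => h ^ m)
    {γ : Fin 2 → ℕ} (hγ : ∑ j, γ j < 2 * p + 2) :
    (fun h => correctedError α s ξ w h fun x => g x * multiPow γ x) =O[𝓝[>] 0]
      fun h => h ^ (m + 2 - α) := by
  by_cases hodd : ∃ j, Odd (γ j)
  · obtain ⟨j, hj⟩ := hodd
    have hzero (h : ℝ) : correctedError α s ξ w h (fun x => g x * multiPow γ x) = 0 :=
      correctedError_eq_zero_of_odd hs j fun x => by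
        rw [hg, multiPow_reflectCoord_of_odd hj, mul_neg]
    simpa only [hzero] using isBigO_zero _ _
  simp only [not_exists, Nat.not_odd_iff_even, even_iff_exists_two_mul] at hodd
  choose a ha using hodd
  rw [Fin.sum_univ_two, ha, ha] at hγ
  obtain ⟨i, hi⟩ := hξsurj (a 0, a 1) (by dsimp only; omega)
  have hγi : γ = ![2 * (ξ i).1, 2 * (ξ i).2] := by
    ext j
    fin_cases j <;> simp [hi, ha]
  have hpow : (fun h : ℝ => h ^ (2 * (((ξ i).1 : ℝ) + ((ξ i).2 : ℝ)) + 2 - α) * h ^ m)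
      =O[𝓝[>] 0] fun h => h ^ (m + 2 - α) := by
    refine IsBigO.of_bound 1 ?_
    filter_upwards [Ioo_mem_nhdsGT (zero_lt_one' ℝ)] with h hh
    rw [one_mul, ← rpow_natCast, ← rpow_add hh.1, norm_of_nonneg (rpow_nonneg hh.1.le _),
      norm_of_nonneg (rpow_nonneg hh.1.le _)]
    refine rpow_le_rpow_of_exponent_ge hh.1 hh.2.le ?_
    linarith [(ξ i).1.cast_nonneg (α := ℝ), (ξ i).2.cast_nonneg (α := ℝ)]
  refine IsBigO.congr' ?_ ?_ (.refl _ _)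
    (f₁ := fun h => -(h ^ (2 * (((ξ i).1 : ℝ) + ((ξ i).2 : ℝ)) + 2 - α) *
      ((momentMatrix ξ).mulVec (cutoffDiagonal g ξ h * w) - correctionMoment α s g ξ h) i))
  · exact (((isBigO_refl _ _).mul (isBigO_pi.1 hres i)).trans hpow).neg_left
  · filter_upwards [self_mem_nhdsWithin] with h hh
    rw [hγi, correctedError_cutoff_mul_multiPow hg hh]

theorem continuous_and_isBigO_correctedError_of_mem_span (hα : α < 2)
    (hs : IsHomogeneousKernel (-α) s) (hg : Continuous g) (hgc : HasCompactSupport g)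
    {S : Set (Fin 2 → ℕ)} (hS : ∀ γ ∈ S, (fun h => correctedError α s ξ w h
      fun x => g x * multiPow γ x) =O[𝓝[>] 0] fun h => h ^ (m + 2 - α))
    {P : (Fin 2 → ℝ) → ℝ} (hP : P ∈ Submodule.span ℝ (multiPow '' S)) :
    Continuous P ∧ (fun h => correctedError α s ξ w h fun x => g x * P x) =O[𝓝[>] 0]
      fun h => h ^ (m + 2 - α) := by
  induction hP using Submodule.span_induction with
  | mem P hP =>
    obtain ⟨γ, hγ, rfl⟩ := hP
    exact ⟨(contDiff_multiPow γ (q := 0)).continuous, hS γ hγ⟩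
  | zero =>
    refine ⟨continuous_const, ?_⟩
    have hzero (h : ℝ) : correctedError α s ξ w h
        (fun x => g x * (0 : (Fin 2 → ℝ) → ℝ) x) = 0 := by
      simpa using correctedError_const_mul (α := α) (s := s) (u := fun _ => 0) 0
    simpa only [hzero] using isBigO_zero _ _
  | add P Q _ _ hP hQ =>
    refine ⟨hP.1.add hQ.1, (hP.2.add hQ.2).congr' ?_ (.refl _ _)⟩
    filter_upwards [self_mem_nhdsWithin] with h hh
    simp only [Pi.add_apply, mul_add]
    exact (correctedError_add hα hs (ne_of_gt hh) (hg.mul hP.1) hgc.mul_right (hg.mul hQ.1)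
      hgc.mul_right).symm
  | smul c P _ hP =>
    refine ⟨hP.1.const_smul c, ?_⟩
    simpa only [Pi.smul_apply, smul_eq_mul, mul_left_comm _ c, correctedError_const_mul] using
      hP.2.const_mul_left c

theorem vanishesToOrder_sub_cutoff_mul_taylorPoly (hφ : ContDiff ℝ m φ) (hg : ContDiff ℝ m g)
    (hg1 : VanishesToOrder m fun x => g x - 1) :
    VanishesToOrder m fun x => φ x - g x * taylorPoly m φ x := by
  have hP : ContDiff ℝ m (taylorPoly m φ) := contDiff_taylorPoly m φ
  have hg' : ContDiff ℝ m fun x => g x - 1 := hg.sub contDiff_const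
  have hsub := (VanishesToOrder.sub_taylorPoly hφ).sub (hφ.sub hP) (hg'.mul hP)
    (hg1.mul_right hg' hP)
  convert hsub using 2
  ring

theorem isBigO_correctedError (hα : α < 2) (hs : IsHomogeneousKernel (-α) s)
    (hs_even : ∀ j x, s (reflectCoord j x) = s x) (hmq : 2 * p + 2 ≤ q)
    (hq : 2 * (p : ℝ) + 4 - α < q) (hφ : ContDiff ℝ q φ) (hφc : HasCompactSupport φ)
    (hg : ContDiff ℝ (⊤ : ℕ∞) g) (hgc : HasCompactSupport g)
    (hg_even : ∀ j x, g (reflectCoord j x) = g x)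
    (hg1 : VanishesToOrder (2 * p + 2) fun x => g x - 1)
    (hξsurj : ∀ γ : ℕ × ℕ, γ.1 + γ.2 ≤ p → ∃ i, ξ i = γ)
    (hres : (fun h => (momentMatrix ξ).mulVec (cutoffDiagonal g ξ h * w) -
      correctionMoment α s g ξ h) =O[𝓝[>] 0] fun h => h ^ (2 * p + 2)) :
    (fun h => correctedError α s ξ w h φ) =O[𝓝[>] 0] fun h => h ^ (2 * (p : ℝ) + 4 - α) := by
  set P := taylorPoly (2 * p + 2) φ
  have hrate : ((2 * p + 2 : ℕ) : ℝ) + 2 - α = 2 * (p : ℝ) + 4 - α := by push_cast; ring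
  have hgq (k : ℕ) : ContDiff ℝ k g := contDiff_infty.1 hg k
  have hgP : ContDiff ℝ q fun x => g x * P x := (hgq q).mul (contDiff_taylorPoly _ φ)
  have hflat : VanishesToOrder (2 * p + 2) fun x => φ x - g x * P x :=
    vanishesToOrder_sub_cutoff_mul_taylorPoly (hφ.of_le (by exact_mod_cast hmq)) (hgq _) hg1
  have hremainder := isBigO_correctedError_of_vanishesToOrder (ξ := ξ) (w := w) hα hs hmq
    (hrate.trans_lt hq) (hφ.sub hgP) (hφc.sub hgc.mul_right) hflat
  have hpoly := (continuous_and_isBigO_correctedError_of_mem_span hα hs hg.continuous hgc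
    (fun _ hγ => isBigO_correctedError_cutoff_mul_multiPow hs_even hg_even hξsurj hres hγ)
    (taylorPoly_mem_span_multiPow (2 * p + 2) φ)).2
  rw [hrate] at hremainder hpoly
  refine (hremainder.add hpoly).congr' ?_ (.refl _ _)
  filter_upwards [self_mem_nhdsWithin] with h hh
  have hsplit := correctedError_add (ξ := ξ) (w := w) (u := fun x => φ x - g x * P x)
    (v := fun x => g x * P x) hα hs (ne_of_gt hh) (hφ.continuous.sub hgP.continuous)
    (hφc.sub hgc.mul_right) hgP.continuous hgc.mul_right
  simpa only [sub_add_cancel] using hsplit.symm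

theorem on_diagonal_corrected_trapezoidal_rule_general [DecidableEq ι] (hα : α < 2)
    (hs : IsHomogeneousKernel (-α) s) (hs_even : ∀ j x, s (reflectCoord j x) = s x)
    (hmq : 2 * p + 2 ≤ q) (hq : 2 * (p : ℝ) + 4 - α < q)
    (hφ : ContDiff ℝ q φ) (hφc : HasCompactSupport φ)
    (hg : ContDiff ℝ (⊤ : ℕ∞) g) (hgc : HasCompactSupport g)
    (hg_even : ∀ j x, g (reflectCoord j x) = g x)
    (hg1 : VanishesToOrder (2 * p + 2) fun x => g x - 1)
    (hξinj : Function.Injective ξ) (hξmem : ∀ i, (ξ i).1 + (ξ i).2 ≤ p)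
    (hξsurj : ∀ γ : ℕ × ℕ, γ.1 + γ.2 ≤ p → ∃ i, ξ i = γ) {ω : ℝ → ι → ℝ}
    (hω : ∀ᶠ h in 𝓝[>] 0, (momentMatrix ξ * Matrix.diagonal (cutoffDiagonal g ξ h)).mulVec (ω h) =
      correctionMoment α s g ξ h) :
    ∃ ωbar : ι → ℝ,
      ((fun h => ω h - ωbar) =O[𝓝[>] 0] fun h => h ^ (2 * p + 2)) ∧
      (fun h => trap h (fun x => φ x * s x) +
        h ^ (2 - α) * (∑ i, ωbar i * ∑ β ∈ Gon (ξ i), φ (gridPt β h)) -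
        ∫ x, φ x * s x) =O[𝓝[>] 0] fun h => h ^ (2 * (p : ℝ) + 4 - α) := by
  have hK := isUnit_det_momentMatrix hξinj hξmem hξsurj
  have hG := isBigO_cutoffDiagonal_sub_one (ξ := ξ) (contDiff_infty.1 hg (2 * p + 2)) hg1
  obtain ⟨cbar, hc⟩ := exists_isBigO_correctionMoment_sub (ξ := ξ) hα hs (by omega) hg hgc hg1
  have hη : Tendsto (fun h : ℝ => h ^ (2 * p + 2)) (𝓝[>] 0) (𝓝 0) :=
    ((continuous_pow (2 * p + 2)).tendsto' 0 0 (by simp)).mono_left nhdsWithin_le_nhds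
  refine ⟨(momentMatrix ξ)⁻¹.mulVec cbar, isBigO_sub_inv_mulVec hK hη hG hc hω, ?_⟩
  have herror := isBigO_correctedError hα hs hs_even hmq hq hφ hφc hg hgc hg_even hg1 hξsurj
    (isBigO_mulVec_mul_sub hK hG hc)
  refine herror.neg_left.congr_left fun h => ?_
  rw [correctedError, trapError]
  ring

end CorrectedRule

/-- convergence of the correction weights and `O(h^{2p+4-α})` accuracy of the
on-diagonal corrected trapezoidal rule. -/
theorem on_diagonal_corrected_trapezoidal_rule
    (p : ℕ) (α : ℝ) (hα0 : 0 < α) (hα2 : α < 2)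
    (Nsm : ℕ) (hNsm : 2 * p + 4 ≤ Nsm)
    (φ : (Fin 2 → ℝ) → ℝ) (hφ : ContDiff ℝ (Nsm : ℕ∞) φ) (hφc : HasCompactSupport φ)
    (g : (Fin 2 → ℝ) → ℝ) (hg : ContDiff ℝ (⊤ : ℕ∞) g) (hgc : HasCompactSupport g)
    (hgrad : ∀ x y, euclNorm x = euclNorm y → g x = g y)
    (hg0 : g 0 = 1)
    (hgd : ∀ k : Fin 2 → ℕ, 1 ≤ ∑ j, k j → ∑ j, k j ≤ 2 * p + 1 → md k g 0 = 0)
    (Np : ℕ) (hNp : Np = (p + 1) * (p + 2) / 2)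
    (ξ : Fin Np → ℕ × ℕ) (hξinj : Function.Injective ξ)
    (hξmem : ∀ i, (ξ i).1 + (ξ i).2 ≤ p)
    (hξsurj : ∀ γ : ℕ × ℕ, γ.1 + γ.2 ≤ p → ∃ i, ξ i = γ)
    (K : Matrix (Fin Np) (Fin Np) ℝ)
    (hK : ∀ i j, K i j = ∑ β ∈ Gon (ξ j),
      (β.1 : ℝ) ^ (2 * (ξ i).1) * (β.2 : ℝ) ^ (2 * (ξ i).2))
    (G : ℝ → Matrix (Fin Np) (Fin Np) ℝ)
    (hG : ∀ h, G h = Matrix.diagonal fun j => g (gridPt (((ξ j).1 : ℤ), ((ξ j).2 : ℤ)) h))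
    (c : ℝ → Fin Np → ℝ)
    (hc : ∀ h : ℝ, 0 < h → ∀ i, c h i =
      h ^ (-(2 * (((ξ i).1 : ℝ) + ((ξ i).2 : ℝ)) + 2 - α)) *
        ((∫ x : Fin 2 → ℝ, g x * sOn α x * x 0 ^ (2 * (ξ i).1) * x 1 ^ (2 * (ξ i).2)) -
          trap h fun x => g x * sOn α x * x 0 ^ (2 * (ξ i).1) * x 1 ^ (2 * (ξ i).2)))
    (ω : ℝ → Fin Np → ℝ)
    (hω : ∃ h₀ > (0:ℝ), ∀ h : ℝ, 0 < h → h < h₀ → (K * G h).mulVec (ω h) = c h) :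
    ∃ ωbar : Fin Np → ℝ,
      (∃ C > (0:ℝ), ∃ h₁ > (0:ℝ), ∀ h : ℝ, 0 < h → h < h₁ →
        Real.sqrt (∑ i, (ω h i - ωbar i) ^ 2) ≤ C * h ^ (2 * p + 2)) ∧
      (∃ C > (0:ℝ), ∃ h₁ > (0:ℝ), ∀ h : ℝ, 0 < h → h < h₁ →
        |trap h (fun x => φ x * sOn α x) +
            h ^ ((2:ℝ) - α) * (∑ i, ωbar i * ∑ β ∈ Gon (ξ i), φ (gridPt β h)) -
            ∫ x : Fin 2 → ℝ, φ x * sOn α x| ≤ C * h ^ (2 * (p : ℝ) + 4 - α)) := by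
  have hg1 : VanishesToOrder (2 * p + 2) fun x => g x - 1 :=
    vanishesToOrder_sub_const hg hg0 fun γ h1 h2 => hgd γ h1 (by omega)
  have hg_even (j : Fin 2) (x : Fin 2 → ℝ) : g (reflectCoord j x) = g x :=
    hgrad _ _ (euclNorm_reflectCoord j x)
  have hsystem : ∀ᶠ h in nhdsWithin 0 (Set.Ioi 0),
      (momentMatrix ξ * Matrix.diagonal (cutoffDiagonal g ξ h)).mulVec (ω h) =
        correctionMoment α (sOn α) g ξ h := by
    obtain rfl : K = momentMatrix ξ := Matrix.ext hK
    obtain ⟨h₀, hh₀, hsolve⟩ := hω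
    filter_upwards [Ioo_mem_nhdsGT hh₀] with h hh
    exact hG h ▸ (hsolve h hh.1 hh.2).trans (funext (hc h hh.1))
  obtain ⟨ωbar, hweights, herror⟩ := on_diagonal_corrected_trapezoidal_rule_general hα2
    (isHomogeneousKernel_sOn α) sOn_reflectCoord (by omega : 2 * p + 2 ≤ Nsm)
    (by have : (2 * p + 4 : ℝ) ≤ Nsm := by exact_mod_cast hNsm
        linarith) (by exact_mod_cast hφ) hφc hg hgc hg_even hg1 hξinj hξmem hξsurj hsystem
  refine ⟨ωbar, ?_, exists_forall_abs_le_of_isBigO_nhdsGT_zero herror fun h hh =>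
    rpow_nonneg hh.le _⟩
  simpa only [Pi.sub_apply, abs_of_nonneg (sqrt_nonneg _)] using
    exists_forall_abs_le_of_isBigO_nhdsGT_zero (isBigO_sqrt_sum_sq hweights)
      fun h hh => pow_nonneg hh.le _
end

section
/- Let n ∈ ℕ, 0 < α < 2, and η, k ∈ ℕ₀^n. There exists a polynomial P_{k,η} in n variables with deg P_{k,η} = 2 + |η|₁ + |k|₁ such that for all x ∈ ℝ^n∖{0}, ∂^k ( x^η x₁² / |x|^{n+α} ) = |x|^{−(n−2+α−|η|₁+|k|₁)} · P_{k,η}(x/|x|). -/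
open MeasureTheory Real

/-!
Differentiating a quotient `p / |x| ^ s`, with `p` a form of degree `d`, gives
`∂ⱼ (p / |x| ^ s) = (|x|² ∂ⱼp - s xⱼ p) / |x| ^ (s + 2)`, again a quotient of this kind, with a
numerator of degree `d + 1`. Iterating, `∂ᵏ (p / |x| ^ s) = q / |x| ^ (s + 2|k|)` with `q` a form
of degree `d + |k|`, and homogeneity pulls the factor `|x| ^ (d + |k|)` out of `q`. If `q = 0`, as
happens for the derivatives of `x₁² / |x|²` in dimension one, a polynomial of the required degree is
instead found among the multiples of `|x|² - 1`, which vanish on the unit sphere.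
-/

open MvPolynomial

section Polynomials

variable {σ R : Type*}

lemma eval_smul_of_isHomogeneous [CommSemiring R] {p : MvPolynomial σ R} {d : ℕ}
    (hp : p.IsHomogeneous d) (r : R) (x : σ → R) : eval (r • x) p = r ^ d * eval x p := by
  rw [eval_eq, eval_eq, Finset.mul_sum]
  refine Finset.sum_congr rfl fun m hm => ?_
  simp only [Pi.smul_apply, smul_eq_mul, mul_pow, Finset.prod_mul_distrib,
    Finset.prod_pow_eq_pow_sum, hp.degree_eq_sum_deg_support hm]
  ring

lemma differentiable_mvPolynomial_eval [Finite σ] {𝕜 : Type*} [NontriviallyNormedField 𝕜]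
    [CompleteSpace 𝕜] (p : MvPolynomial σ 𝕜) : Differentiable 𝕜 fun y => eval y p :=
  have := Fintype.ofFinite σ
  fun x => (AnalyticOnNhd.eval_mvPolynomial p x trivial).differentiableAt

variable [Fintype σ]

lemma isHomogeneous_prod_X_pow_mul_X_sq [CommSemiring R] (η : σ → ℕ) (i : σ) :
    ((∏ j, X j ^ η j) * X i ^ 2 : MvPolynomial σ R).IsHomogeneous (2 + ∑ j, η j) :=
  add_comm 2 (∑ j, η j) ▸
    (IsHomogeneous.prod _ _ η fun j _ => isHomogeneous_X_pow j (η j)).mul (isHomogeneous_X_pow i 2)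

lemma isHomogeneous_psum [CommSemiring R] (m : ℕ) : (psum σ R m).IsHomogeneous m :=
  .sum _ _ _ fun i _ => isHomogeneous_X_pow i m

lemma pderiv_psum [CommSemiring R] (i : σ) (m : ℕ) :
    pderiv i (psum σ R m) = (m : MvPolynomial σ R) * X i ^ (m - 1) := by
  classical
  simp [psum, pderiv_X, Pi.single_apply]

lemma eval_psum [CommSemiring R] (x : σ → R) (m : ℕ) : eval x (psum σ R m) = ∑ i, x i ^ m := by
  simp [psum]

variable [Nonempty σ]

lemma psum_ne_zero [CommSemiring R] [Nontrivial R] {m : ℕ} (hm : m ≠ 0) : psum σ R m ≠ 0 := by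
  classical
  intro h
  simpa [eval_psum, Pi.single_apply, ite_pow, hm] using
    congrArg (eval (Pi.single (Classical.arbitrary σ) 1)) h

lemma totalDegree_psum_sub_one [CommRing R] [Nontrivial R] {m : ℕ} (hm : m ≠ 0) :
    (psum σ R m - 1).totalDegree = m := by
  have hdeg : (psum σ R m).totalDegree = m := (isHomogeneous_psum m).totalDegree (psum_ne_zero hm)
  rw [sub_eq_add_neg, totalDegree_add_eq_left_of_totalDegree_lt, hdeg]
  simpa [hdeg] using hm.bot_lt

lemma exists_totalDegree_eq_eval_eq_zero_of_sum_pow_eq_one [CommRing R] [IsDomain R] {m d : ℕ}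
    (hm : m ≠ 0) (hmd : m ≤ d) :
    ∃ P : MvPolynomial σ R, P.totalDegree = d ∧ ∀ x, ∑ i, x i ^ m = 1 → eval x P = 0 := by
  let i : σ := Classical.arbitrary σ
  have hdeg : (psum σ R m - 1).totalDegree = m := totalDegree_psum_sub_one hm
  have hne : psum σ R m - 1 ≠ 0 := fun h => hm (by simpa [h] using hdeg.symm)
  refine ⟨(psum σ R m - 1) * X i ^ (d - m), ?_, fun x hx => by simp [eval_psum, hx]⟩
  rw [totalDegree_mul_of_isDomain hne (pow_ne_zero _ (X_ne_zero i)), hdeg, totalDegree_X_pow,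
    Nat.add_sub_cancel' hmd]

lemma exists_totalDegree_eq_eval_eq_of_sum_pow_eq_one [CommRing R] [IsDomain R] {m d : ℕ}
    {q : MvPolynomial σ R} (hq : q.IsHomogeneous d) (hm : m ≠ 0) (hmd : m ≤ d) :
    ∃ P : MvPolynomial σ R, P.totalDegree = d ∧ ∀ x, ∑ i, x i ^ m = 1 → eval x P = eval x q := by
  rcases eq_or_ne q 0 with rfl | hq0
  · simpa using exists_totalDegree_eq_eval_eq_zero_of_sum_pow_eq_one hm hmd
  · exact ⟨q, hq.totalDegree hq0, fun _ _ => rfl⟩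

end Polynomials

section EuclideanNorm

variable {n : ℕ} {x : Fin n → ℝ}

lemma euclNorm_eq_norm_toLp (x : Fin n → ℝ) : euclNorm x = ‖WithLp.toLp 2 x‖ := by
  simp [euclNorm, EuclideanSpace.norm_eq]

lemma euclNorm_sq (x : Fin n → ℝ) : euclNorm x ^ 2 = ∑ j, x j ^ 2 :=
  Real.sq_sqrt (Finset.sum_nonneg fun _ _ => sq_nonneg _)

lemma euclNorm_nonneg (x : Fin n → ℝ) : 0 ≤ euclNorm x :=
  Real.sqrt_nonneg _

lemma euclNorm_pos (hx : x ≠ 0) : 0 < euclNorm x := by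
  simpa [euclNorm_eq_norm_toLp] using hx

lemma eval_psum_two_ne_zero (hx : x ≠ 0) : eval x (psum (Fin n) ℝ 2) ≠ 0 := by
  simpa [eval_psum, ← euclNorm_sq] using (euclNorm_pos hx).ne'

lemma euclNorm_rpow_eq_eval_psum (x : Fin n → ℝ) (s : ℝ) :
    euclNorm x ^ s = eval x (psum (Fin n) ℝ 2) ^ (s / 2) := by
  rw [eval_psum, ← euclNorm_sq, ← Real.rpow_natCast, ← Real.rpow_mul (euclNorm_nonneg x)]
  congr 1
  push_cast
  ring

lemma sum_inv_euclNorm_smul_sq_eq_one (hx : x ≠ 0) : ∑ j, ((euclNorm x)⁻¹ • x) j ^ 2 = 1 := by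
  simp only [Pi.smul_apply, smul_eq_mul, mul_pow, ← Finset.mul_sum, ← euclNorm_sq]
  rw [← mul_pow, inv_mul_cancel₀ (euclNorm_pos hx).ne', one_pow]

end EuclideanNorm

section PartialDerivatives

variable {n : ℕ} {f g : (Fin n → ℝ) → ℝ} {x : Fin n → ℝ} (j : Fin n)

lemma pd_mul (hf : DifferentiableAt ℝ f x) (hg : DifferentiableAt ℝ g x) :
    pd j (fun y => f y * g y) x = f x * pd j g x + pd j f x * g x := by
  simp [pd, fderiv_fun_mul hf hg, mul_comm (g x)]

lemma pd_rpow_const (hf : DifferentiableAt ℝ f x) (hx : f x ≠ 0) (s : ℝ) :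
    pd j (fun y => f y ^ s) x = s * f x ^ (s - 1) * pd j f x := by
  simp [pd, (hf.hasFDerivAt.rpow_const (p := s) (.inl hx)).fderiv]

lemma pd_eval (p : MvPolynomial (Fin n) ℝ) (x : Fin n → ℝ) :
    pd j (fun y => eval y p) x = eval x (pderiv j p) := by
  induction p using MvPolynomial.induction_on with
  | C a => simp [pd]
  | add p q hp hq =>
    simp only [pd] at hp hq
    simp [pd, fderiv_fun_add (differentiable_mvPolynomial_eval p x)
      (differentiable_mvPolynomial_eval q x), hp, hq]
  | mul_X p i hp =>
    have hX : pd j (fun y => y i) x = eval x (pderiv j (X i)) := by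
      simp [pd, (hasFDerivAt_apply i x).fderiv, pderiv_X, Pi.single_apply, apply_ite, eq_comm]
    simp only [map_mul, eval_X, pderiv_mul, map_add]
    rw [pd_mul j (differentiable_mvPolynomial_eval p x) (differentiableAt_apply i x), hp, hX,
      add_comm]

lemma differentiableAt_euclNorm_rpow (hx : x ≠ 0) (s : ℝ) :
    DifferentiableAt ℝ (fun y => euclNorm y ^ s) x := by
  simp only [euclNorm_rpow_eq_eval_psum]
  exact (differentiable_mvPolynomial_eval _ x).rpow_const (.inl (eval_psum_two_ne_zero hx))

lemma pd_euclNorm_rpow (hx : x ≠ 0) (s : ℝ) :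
    pd j (fun y => euclNorm y ^ s) x = s * x j * euclNorm x ^ (s - 2) := by
  simp only [euclNorm_rpow_eq_eval_psum]
  rw [pd_rpow_const j (differentiable_mvPolynomial_eval _ x) (eval_psum_two_ne_zero hx), pd_eval,
    pderiv_psum, sub_div, div_self two_ne_zero]
  simp only [map_mul, map_natCast, map_pow, eval_X]
  push_cast
  ring

lemma pd_eval_div_euclNorm_rpow (hx : x ≠ 0) (p : MvPolynomial (Fin n) ℝ) (s : ℝ) :
    pd j (fun y => eval y p / euclNorm y ^ s) x =
      eval x (psum (Fin n) ℝ 2 * pderiv j p - C s * (X j * p)) / euclNorm x ^ (s + 2) := by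
  have hr : 0 < euclNorm x := euclNorm_pos hx
  have hsplit : euclNorm x ^ (-s) = euclNorm x ^ 2 * euclNorm x ^ (-s - 2) := by
    rw [← Real.rpow_natCast, ← Real.rpow_add hr]
    congr 1
    push_cast
    ring
  calc pd j (fun y => eval y p / euclNorm y ^ s) x
      = pd j (fun y => eval y p * euclNorm y ^ (-s)) x := by
        simp only [Real.rpow_neg (euclNorm_nonneg _), div_eq_mul_inv]
    _ = eval x p * (-s * x j * euclNorm x ^ (-s - 2)) +
          eval x (pderiv j p) * euclNorm x ^ (-s) := by
        rw [pd_mul j (differentiable_mvPolynomial_eval p x)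
          (differentiableAt_euclNorm_rpow hx (-s)), pd_euclNorm_rpow j hx, pd_eval]
    _ = eval x (psum (Fin n) ℝ 2 * pderiv j p - C s * (X j * p)) * euclNorm x ^ (-s - 2) := by
        simp only [hsplit, map_sub, map_mul, eval_C, eval_X, eval_psum, euclNorm_sq]
        ring
    _ = eval x (psum (Fin n) ℝ 2 * pderiv j p - C s * (X j * p)) / euclNorm x ^ (s + 2) := by
        rw [← neg_add', Real.rpow_neg hr.le, div_eq_mul_inv]

end PartialDerivatives

/-- Away from the origin, `f` is the quotient of a form of degree `d` by `|x| ^ s`. This is the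
property of the kernel that partial differentiation preserves, up to a shift of `d` and `s`. Nothing
is asked of `f` at the origin, where the kernel may be singular. -/
def IsFormDivNormRpow {n : ℕ} (d : ℕ) (s : ℝ) (f : (Fin n → ℝ) → ℝ) : Prop :=
  ∃ q : MvPolynomial (Fin n) ℝ, q.IsHomogeneous d ∧ ∀ x ≠ 0, f x = eval x q / euclNorm x ^ s

namespace IsFormDivNormRpow

variable {n d : ℕ} {s : ℝ} {f : (Fin n → ℝ) → ℝ}

protected lemma pd (hf : IsFormDivNormRpow d s f) (j : Fin n) :
    IsFormDivNormRpow (d + 1) (s + 2) (pd j f) := by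
  obtain ⟨q, hq, hfq⟩ := hf
  refine ⟨psum (Fin n) ℝ 2 * pderiv j q - C s * (X j * q), .sub ?_ ?_, fun x hx => ?_⟩
  · cases d with
    | zero =>
      rw [totalDegree_eq_zero_iff_eq_C.1 ((totalDegree_zero_iff_isHomogeneous _).2 hq), pderiv_C,
        mul_zero]
      exact isHomogeneous_zero ..
    | succ d =>
      simpa [add_comm, add_left_comm, add_assoc] using (isHomogeneous_psum 2).mul hq.pderiv
  · simpa only [add_comm 1 d] using ((isHomogeneous_X ℝ j).mul hq).C_mul s
  · have hlocal : f =ᶠ[nhds x] fun y => eval y q / euclNorm y ^ s :=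
      Filter.eventually_of_mem (isOpen_ne.mem_nhds hx) hfq
    rw [← pd_eval_div_euclNorm_rpow j hx, pd, hlocal.fderiv_eq, pd]

lemma iterate_pd (hf : IsFormDivNormRpow d s f) (j : Fin n) (a : ℕ) :
    IsFormDivNormRpow (d + a) (s + 2 * a) ((pd j)^[a] f) := by
  induction a with
  | zero => simpa using hf
  | succ a ih =>
    rw [Function.iterate_succ_apply']
    convert! ih.pd j using 1
    push_cast
    ring

lemma foldr_iterate_pd (hf : IsFormDivNormRpow d s f) (k : Fin n → ℕ) (l : List (Fin n)) :
    IsFormDivNormRpow (d + (l.map k).sum) (s + 2 * (l.map k).sum)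
      (l.foldr (fun j g => (pd j)^[k j] g) f) := by
  induction l with
  | nil => simpa using hf
  | cons j l ih =>
    convert! ih.iterate_pd j (k j) using 1
    · simp only [List.map_cons, List.sum_cons]
      omega
    · simp only [List.map_cons, List.sum_cons]
      push_cast
      ring

protected lemma md (hf : IsFormDivNormRpow d s f) (k : Fin n → ℕ) :
    IsFormDivNormRpow (d + ∑ j, k j) (s + 2 * ∑ j, (k j : ℝ)) (md k f) := by
  rw [← Nat.cast_sum, Fin.sum_univ_def]
  exact hf.foldr_iterate_pd k (List.finRange n)

lemma exists_totalDegree_eq_and_eq_rpow_mul_eval (hf : IsFormDivNormRpow d s f) (hn : 0 < n)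
    (hd : 2 ≤ d) :
    ∃ P : MvPolynomial (Fin n) ℝ, P.totalDegree = d ∧ ∀ x ≠ 0,
      f x = euclNorm x ^ (d - s) * eval (fun j => x j / euclNorm x) P := by
  have : Nonempty (Fin n) := ⟨⟨0, hn⟩⟩
  obtain ⟨q, hq, hfq⟩ := hf
  obtain ⟨P, hdeg, hPq⟩ :=
    exists_totalDegree_eq_eval_eq_of_sum_pow_eq_one hq two_ne_zero hd
  refine ⟨P, hdeg, fun x hx => ?_⟩
  have hr : 0 < euclNorm x := euclNorm_pos hx
  have hunit : (fun j => x j / euclNorm x) = (euclNorm x)⁻¹ • x := by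
    funext j
    simp [div_eq_inv_mul]
  calc f x = eval x q / euclNorm x ^ s := hfq x hx
    _ = euclNorm x ^ (d - s) * ((euclNorm x)⁻¹ ^ d * eval x q) := by
      rw [Real.rpow_sub hr, Real.rpow_natCast, inv_pow]
      field_simp
    _ = euclNorm x ^ (d - s) * eval (fun j => x j / euclNorm x) P := by
      rw [← eval_smul_of_isHomogeneous hq, hunit, hPq _ (sum_inv_euclNorm_smul_sq_eq_one hx)]

end IsFormDivNormRpow

theorem deriv_structure_on_diagonal_kernel_general {n d : ℕ} (hn : 0 < n)
    {p : MvPolynomial (Fin n) ℝ} (hp : p.IsHomogeneous d) (s : ℝ) (k : Fin n → ℕ)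
    (hd : 2 ≤ d + ∑ j, k j) :
    ∃ P : MvPolynomial (Fin n) ℝ, P.totalDegree = d + ∑ j, k j ∧ ∀ x ≠ 0,
      md k (fun y => eval y p / euclNorm y ^ s) x =
        euclNorm x ^ (-((s - d) + ∑ j, (k j : ℝ))) * eval (fun j => x j / euclNorm x) P := by
  have hform : IsFormDivNormRpow d s fun y => eval y p / euclNorm y ^ s := ⟨p, hp, fun _ _ => rfl⟩
  obtain ⟨P, hdeg, hP⟩ := (hform.md k).exists_totalDegree_eq_and_eq_rpow_mul_eval hn hd
  refine ⟨P, hdeg, fun x hx => ?_⟩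
  rw [hP x hx]
  congr 2
  push_cast
  ring

/-- structure of the multi-index derivatives of the on-diagonal singular
kernel `x ↦ x^η x₁² / |x|^{n+α}`. -/
theorem deriv_structure_on_diagonal_kernel
    (n : ℕ) (hn : 0 < n) (α : ℝ) (hα0 : 0 < α) (hα2 : α < 2)
    (η k : Fin n → ℕ) :
    ∃ P : MvPolynomial (Fin n) ℝ,
      P.totalDegree = 2 + (∑ j, η j) + (∑ j, k j) ∧
      ∀ x : Fin n → ℝ, x ≠ 0 →
        md k (fun y => (∏ j, y j ^ η j) * y ⟨0, hn⟩ ^ 2 / euclNorm y ^ ((n : ℝ) + α)) x =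
          euclNorm x ^ (-(((n : ℝ) - 2 + α - ∑ j, (η j : ℝ)) + ∑ j, (k j : ℝ))) *
            MvPolynomial.eval (fun j => x j / euclNorm x) P := by
  have hexp : (n : ℝ) + α - (2 + ∑ j, η j : ℕ) = n - 2 + α - ∑ j, (η j : ℝ) := by push_cast; ring
  simpa only [map_mul, map_prod, map_pow, eval_X, hexp] using
    deriv_structure_on_diagonal_kernel_general hn (isHomogeneous_prod_X_pow_mul_X_sq η ⟨0, hn⟩)
      (n + α) k (by lia)
end
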